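/- For every odd integer r ≥ 3 and every integer Δ ≥ 2, setting Δ′ = ⌈(r+1)Δ/r⌉, there exists a constant C = C(r,Δ) > 0 such that for every n ≥ 2 there is an r-uniform hypergraph on exactly n vertices that is universal for 𝓕^(r)(n,Δ) and has at most C·n^{r − (r+1)/Δ′}·(ln n)^{2(r+1)/Δ′} edges. -/

import Mathlib

/-!
The universal hypergraph on `Fin n` is built around a labelling of the vertices by about
`n / (log n) ^ 2` bit strings. Fix `s`, depending only on `r` and `Δ`, and let `X` be the set of
strings `x` with `s` coordinates `x i` of `t` bits each. The vertices are spread evenly over `X` by a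
map `β`. An `r`-set is an edge when, up to one step in a bounded-degree expander on `X`, its labels
form a *good pattern*: in coordinate `i`, each of the strings with index in a set `N i` is a shift,
by at most one place, of one of the strings with index outside `N i`, where the sizes of the `N i`
add up to at least `s * (r + 1) / Δ'`. The strings outside `N i` determine those in `N i` up to
boundedly many choices, so at most a constant times `|X| ^ (r - (r + 1) / Δ')` patterns are good, each
accounting for at most a constant times `(n / |X|) ^ r` edges (`card_univEdges_le`).

Universality rests on three facts.

* Layouts (`exists_layout`). The vertices of a hypergraph `F` of the family can be placed on lines in
  `s` ways, boundedly many at each position, so that for each edge `e` there are sets `N i ⊆ e`, of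
  total size at least `s * (r + 1) / Δ'`, with every vertex of `N i` within one place, in the `i`-th
  arrangement, of a vertex of `e \ N i`. If `(r + 1) * Δ < Δ' * r`, König's theorem colours the
  incidences of `F` with `Δ` colours so that each colour is the graph of a function mapping a vertex
  of an edge to another vertex of that edge (`layout_slack`); cutting this graph into components of
  bounded size loses few incidences, and a component can be put on a single position
  (`functional_cut`). If equality holds, then `r ∣ Δ`; since `r` is odd, every edge is covered by a
  path on three vertices and a matching, which have `(r + 1) / 2` arcs, and these arcs split over all
  edges into `Δ' / 2` partial permutations, whose orbits are laid out along lines (`layout_tight`).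

* Windows (`exists_windows`). Write random bits along the lines, and label each vertex in coordinate
  `i` by the `t` bits following its place. Neighbouring vertices get shifted strings, so every edge of
  `F` gets a good pattern. As a window meets only `O(t)` others, a Chernoff bound on classes of
  vertices with disjoint windows shows that with positive probability all labels are used almost
  equally often; this is where `|X|` has to be smaller than `n` by a factor `(log n) ^ 2`.

* Relocation (`exists_relocation`). The labels used by `F` and the labels `β` are both almost evenly
  distributed, so expansion gives Hall's condition for a bijection that maps each vertex of `F` to a
  vertex whose `β`-label is adjacent in the expander to its own. The expander is the union of eight
  random permutations (`exists_expander`).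
-/

/-- `EH` (a set of edges on the vertex set `Fin N`) is the edge set of an `r`-uniform
hypergraph that is universal for the family `𝓕^(r)(n,Δ)` of `r`-uniform hypergraphs with
at most `n` vertices and maximum vertex degree at most `Δ`. -/
def HypergraphUniversal (r n Δ N : ℕ) (EH : Finset (Finset (Fin N))) : Prop :=
  ∀ EF : Finset (Finset (Fin n)),
    (∀ e ∈ EF, e.card = r) →
    (∀ v : Fin n, (EF.filter (fun e => v ∈ e)).card ≤ Δ) →
    ∃ φ : Fin n → Fin N, Function.Injective φ ∧ ∀ e ∈ EF, e.image φ ∈ EH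

/-! ### Edge colourings of bipartite multigraphs -/

/-- Regular case of König's edge-colouring theorem, for the bipartite multigraph whose edges are
the `x ∈ F`, joining `a x` on the left to `b x` on the right: Hall's theorem peels off one perfect
matching at a time. -/
theorem regular_arc_coloring {A W : Type*} [Fintype W] [DecidableEq W] [DecidableEq A]
    (a b : A → W) : ∀ (D : ℕ) (F : Finset A),
      (∀ w, (F.filter (fun x => a x = w)).card = D) →
      (∀ w, (F.filter (fun x => b x = w)).card = D) →
      ∃ c : A → ℕ, (∀ x ∈ F, c x < D) ∧
        (∀ x ∈ F, ∀ y ∈ F, c x = c y → a x = a y → x = y) ∧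
        (∀ x ∈ F, ∀ y ∈ F, c x = c y → b x = b y → x = y) := by
  intro D
  induction D with
  | zero =>
    intro F ha hb
    have hF : ∀ x, x ∉ F := by
      intro x hx
      have := ha (a x)
      rw [Finset.card_eq_zero] at this
      have h2 : x ∈ F.filter (fun y => a y = a x) := by simp [hx]
      rw [this] at h2; simp at h2
    exact ⟨fun _ => 0, fun x hx => absurd hx (hF x), fun x hx => absurd hx (hF x),
      fun x hx => absurd hx (hF x)⟩
  | succ D ih =>
    intro F ha hb
    have hall := (Finset.all_card_le_biUnion_card_iff_exists_injective
      (fun w : W => (F.filter (fun x => a x = w)).image b)).1 (by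
        intro S
        set U := S.biUnion (fun w : W => (F.filter (fun x => a x = w)).image b)
        have h1 : (F.filter (fun x => a x ∈ S)).card = (D + 1) * S.card := by
          rw [Finset.card_eq_sum_card_fiberwise (f := a) (t := S)
            (fun x hx => by simp at hx; exact hx.2)]
          rw [Finset.sum_const_nat (m := D + 1), mul_comm]
          intro w hw
          rw [← ha w]
          congr 1
          ext x; simp; rintro h _; rw [h]; exact hw
        have h2 : (F.filter (fun x => b x ∈ U)).card = (D + 1) * U.card := by
          rw [Finset.card_eq_sum_card_fiberwise (f := b) (t := U)
            (fun x hx => by simp at hx; exact hx.2)]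
          rw [Finset.sum_const_nat (m := D + 1), mul_comm]
          intro w hw
          rw [← hb w]
          congr 1
          ext x; simp; rintro h _; rw [h]; exact hw
        have h3 : F.filter (fun x => a x ∈ S) ⊆ F.filter (fun x => b x ∈ U) := by
          intro x hx
          simp only [Finset.mem_filter] at hx ⊢
          refine ⟨hx.1, ?_⟩
          simp only [U, Finset.mem_biUnion, Finset.mem_image, Finset.mem_filter]
          exact ⟨a x, hx.2, x, ⟨hx.1, rfl⟩, rfl⟩
        have h4 := Finset.card_le_card h3
        rw [h1, h2] at h4
        exact Nat.le_of_mul_le_mul_left h4 (Nat.succ_pos D))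
    obtain ⟨f, hf, hfm⟩ := hall
    have hg : ∀ w, ∃ x ∈ F, a x = w ∧ b x = f w := by
      intro w
      have := hfm w
      simp only [Finset.mem_image, Finset.mem_filter] at this
      obtain ⟨x, ⟨h1, h2⟩, h3⟩ := this
      exact ⟨x, h1, h2, h3⟩
    choose g hgF hga hgb using hg
    have hfs : Function.Surjective f := Finite.surjective_of_injective hf
    have ha' : ∀ w, ((F \ Finset.univ.image g).filter (fun x => a x = w)).card = D := by
      intro w
      have : (F \ Finset.univ.image g).filter (fun x => a x = w)
          = (F.filter (fun x => a x = w)).erase (g w) := by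
        ext x
        simp only [Finset.mem_filter, Finset.mem_sdiff, Finset.mem_image, Finset.mem_univ,
          true_and, Finset.mem_erase, not_exists]
        constructor
        · rintro ⟨⟨h1, h2⟩, h3⟩
          exact ⟨fun h => h2 w h.symm, h1, h3⟩
        · rintro ⟨h1, h2, h3⟩
          refine ⟨⟨h2, fun y hy => h1 ?_⟩, h3⟩
          rw [← hy, hga] at h3
          rw [← hy, h3]
      rw [this, Finset.card_erase_of_mem (by simp [hgF, hga]), ha w]; rfl
    have hb' : ∀ w, ((F \ Finset.univ.image g).filter (fun x => b x = w)).card = D := by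
      intro w
      obtain ⟨u, rfl⟩ := hfs w
      have : (F \ Finset.univ.image g).filter (fun x => b x = f u)
          = (F.filter (fun x => b x = f u)).erase (g u) := by
        ext x
        simp only [Finset.mem_filter, Finset.mem_sdiff, Finset.mem_image, Finset.mem_univ,
          true_and, Finset.mem_erase, not_exists]
        constructor
        · rintro ⟨⟨h1, h2⟩, h3⟩
          exact ⟨fun h => h2 u h.symm, h1, h3⟩
        · rintro ⟨h1, h2, h3⟩
          refine ⟨⟨h2, fun y hy => h1 ?_⟩, h3⟩
          rw [← hy, hgb] at h3
          rw [← hy, hf h3]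
      rw [this, Finset.card_erase_of_mem (by simp [hgF, hgb]), hb (f u)]; rfl
    obtain ⟨c, hc, hca, hcb⟩ := ih _ ha' hb'
    refine ⟨fun x => if x ∈ Finset.univ.image g then D else c x, ?_, ?_, ?_⟩
    · intro x hx
      by_cases h : x ∈ Finset.univ.image g
      · simp only [h, if_true]; omega
      · simp only [h, if_false]
        have := hc x (Finset.mem_sdiff.2 ⟨hx, h⟩); omega
    · intro x hx y hy hxy hab
      by_cases h : x ∈ Finset.univ.image g <;> by_cases h' : y ∈ Finset.univ.image g
      · obtain ⟨u, -, rfl⟩ := Finset.mem_image.1 h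
        obtain ⟨v, -, rfl⟩ := Finset.mem_image.1 h'
        rw [hga, hga] at hab; rw [hab]
      · simp only [h, h', if_true, if_false] at hxy
        have := hc y (Finset.mem_sdiff.2 ⟨hy, h'⟩); omega
      · simp only [h, h', if_true, if_false] at hxy
        have := hc x (Finset.mem_sdiff.2 ⟨hx, h⟩); omega
      · simp only [h, h', if_false] at hxy
        exact hca x (Finset.mem_sdiff.2 ⟨hx, h⟩) y (Finset.mem_sdiff.2 ⟨hy, h'⟩) hxy hab
    · intro x hx y hy hxy hab
      by_cases h : x ∈ Finset.univ.image g <;> by_cases h' : y ∈ Finset.univ.image g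
      · obtain ⟨u, -, rfl⟩ := Finset.mem_image.1 h
        obtain ⟨v, -, rfl⟩ := Finset.mem_image.1 h'
        rw [hgb, hgb] at hab; rw [hf hab]
      · simp only [h, h', if_true, if_false] at hxy
        have := hc y (Finset.mem_sdiff.2 ⟨hy, h'⟩); omega
      · simp only [h, h', if_true, if_false] at hxy
        have := hc x (Finset.mem_sdiff.2 ⟨hx, h⟩); omega
      · simp only [h, h', if_false] at hxy
        exact hcb x (Finset.mem_sdiff.2 ⟨hx, h⟩) y (Finset.mem_sdiff.2 ⟨hy, h'⟩) hxy hab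

/-- König's edge-colouring theorem: a bipartite multigraph of maximum degree at most `D` has a
proper edge colouring with `D` colours. It is made regular by adding its mirror image and parallel
edges between each vertex and its mirror copy. -/
theorem koenig_coloring {A L R : Type*} [Fintype A] [Fintype L] [Fintype R]
    [DecidableEq A] [DecidableEq L] [DecidableEq R] (a : A → L) (b : A → R) (D : ℕ)
    (ha : ∀ l, (Finset.univ.filter (fun x => a x = l)).card ≤ D)
    (hb : ∀ l, (Finset.univ.filter (fun x => b x = l)).card ≤ D) :
    ∃ c : A → Fin D, (∀ x y, c x = c y → a x = a y → x = y) ∧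
      (∀ x y, c x = c y → b x = b y → x = y) := by
  classical
  let deg : L ⊕ R → ℕ := Sum.elim (fun l => (Finset.univ.filter (fun x => a x = l)).card)
    (fun l => (Finset.univ.filter (fun x => b x = l)).card)
  let A' := A ⊕ (A ⊕ (Σ w : L ⊕ R, Fin (D - deg w)))
  obtain ⟨a', a1, a2, a3⟩ : ∃ a' : A' → L ⊕ R, (∀ x, a' (Sum.inl x) = Sum.inl (a x)) ∧
      (∀ x, a' (Sum.inr (Sum.inl x)) = Sum.inr (b x)) ∧
      (∀ p, a' (Sum.inr (Sum.inr p)) = p.1) :=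
    ⟨Sum.elim (fun x => Sum.inl (a x)) (Sum.elim (fun x => Sum.inr (b x)) (fun p => p.1)),
      fun _ => rfl, fun _ => rfl, fun _ => rfl⟩
  obtain ⟨b', b1, b2, b3⟩ : ∃ b' : A' → L ⊕ R, (∀ x, b' (Sum.inl x) = Sum.inr (b x)) ∧
      (∀ x, b' (Sum.inr (Sum.inl x)) = Sum.inl (a x)) ∧
      (∀ p, b' (Sum.inr (Sum.inr p)) = p.1) :=
    ⟨Sum.elim (fun x => Sum.inr (b x)) (Sum.elim (fun x => Sum.inl (a x)) (fun p => p.1)),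
      fun _ => rfl, fun _ => rfl, fun _ => rfl⟩
  have hdeg : ∀ w, deg w ≤ D := by
    rintro (w | w)
    · exact ha w
    · exact hb w
  have key : ∀ w, (∑ x : L ⊕ R, ∑ _y : Fin (D - deg x), if x = w then 1 else 0) = D - deg w := by
    intro w
    simp [Finset.sum_ite_eq']
  obtain ⟨c, hc, hca, hcb⟩ := regular_arc_coloring a' b' D Finset.univ
    (by
      intro w
      have h := hdeg w
      have hk := key w
      rw [Finset.card_filter, Fintype.sum_sum_type, Fintype.sum_sum_type, Fintype.sum_sigma]
      simp only [a1, a2, a3]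
      rw [hk]
      rcases w with w | w
      · simp only [Sum.inl.injEq, reduceCtorEq, if_false, Finset.sum_const_zero, zero_add,
          ← Finset.card_filter]
        simp only [deg, Sum.elim_inl] at h ⊢
        omega
      · simp only [Sum.inr.injEq, reduceCtorEq, if_false, Finset.sum_const_zero, zero_add,
          ← Finset.card_filter]
        simp only [deg, Sum.elim_inr] at h ⊢
        omega)
    (by
      intro w
      have h := hdeg w
      have hk := key w
      rw [Finset.card_filter, Fintype.sum_sum_type, Fintype.sum_sum_type, Fintype.sum_sigma]
      simp only [b1, b2, b3]
      rw [hk]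
      rcases w with w | w
      · simp only [Sum.inl.injEq, reduceCtorEq, if_false, Finset.sum_const_zero, zero_add,
          ← Finset.card_filter]
        simp only [deg, Sum.elim_inl] at h ⊢
        omega
      · simp only [Sum.inr.injEq, reduceCtorEq, if_false, Finset.sum_const_zero, zero_add,
          ← Finset.card_filter]
        simp only [deg, Sum.elim_inr] at h ⊢
        omega)
  refine ⟨fun x => ⟨c (Sum.inl x), hc _ (Finset.mem_univ _)⟩, ?_, ?_⟩
  · intro x y h1 h2
    have := hca (Sum.inl x) (Finset.mem_univ _) (Sum.inl y) (Finset.mem_univ _)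
      (by simpa using h1) (by simp [a1, h2])
    exact Sum.inl_injective this
  · intro x y h1 h2
    have := hcb (Sum.inl x) (Finset.mem_univ _) (Sum.inl y) (Finset.mem_univ _)
      (by simpa using h1) (by simp [b1, h2])
    exact Sum.inl_injective this

/-- A family of fibres of size at most `D * p` can be refined to fibres of size at most `D` by one
more coordinate in `Fin p`. -/
theorem exists_chunks {A L : Type*} [Fintype A] [DecidableEq A] [DecidableEq L] (a : A → L)
    (D p : ℕ) (ha : ∀ l, (Finset.univ.filter (fun x => a x = l)).card ≤ D * p) :
    ∃ h : A → Fin p, ∀ l, (Finset.univ.filter (fun x => (a x, h x) = l)).card ≤ D := by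
  classical
  have emb : ∀ l, Nonempty ({x // a x = l} ↪ Fin (D * p)) := by
    intro l
    apply Function.Embedding.nonempty_of_card_le
    rw [Fintype.card_fin, Fintype.card_subtype]
    exact ha l
  have ι := fun l => (emb l).some
  obtain ⟨k, hk, hinj⟩ : ∃ k : A → ℕ, (∀ x, k x < D * p) ∧
      ∀ x y, a x = a y → k x = k y → x = y := by
    refine ⟨fun x => ι (a x) ⟨x, rfl⟩, fun x => (ι (a x) ⟨x, rfl⟩).2, ?_⟩
    have key : ∀ l x y (h1 : a x = l) (h2 : a y = l),
        (ι (a x) ⟨x, rfl⟩ : ℕ) = (ι (a y) ⟨y, rfl⟩ : ℕ) → x = y := by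
      intro l x y h1 h2 h
      have t : ∀ z l (h : a z = l), (ι (a z) ⟨z, rfl⟩ : ℕ) = (ι l ⟨z, h⟩ : ℕ) := by
        intro z l h; subst h; rfl
      rw [t x l h1, t y l h2] at h
      have := (ι l).injective (Fin.ext h)
      simpa using this
    intro x y hxy
    exact key _ x y hxy rfl
  refine ⟨fun x => ⟨k x / D, Nat.div_lt_of_lt_mul (hk x)⟩, ?_⟩
  rintro ⟨l, q⟩
  conv_rhs => rw [← Finset.card_range D]
  refine Finset.card_le_card_of_injOn (fun x => k x % D) ?_ ?_
  · intro x _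
    simp only [Finset.coe_range, Set.mem_Iio]
    apply Nat.mod_lt
    rcases Nat.eq_zero_or_pos D with h | h
    · have := hk x
      simp [h] at this
    · exact h
  · intro x hx y hy hxy
    simp only [Finset.coe_filter, Finset.mem_univ, true_and, Prod.mk.injEq,
      Set.mem_ofPred_eq] at hx hy
    have e1 : k x / D = q := congrArg Fin.val hx.2
    have e2 : k y / D = q := congrArg Fin.val hy.2
    simp only at hxy
    refine hinj x y (hx.1.trans hy.1.symm) ?_
    rw [← Nat.div_add_mod (k x) D, ← Nat.div_add_mod (k y) D, e1, e2, hxy]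

/-- Equitable form of König's theorem: with left degrees at most `D * p` and right degrees at most
`D * q`, the edges have a `D`-colouring in which each colour has degree at most `p` on the left and
at most `q` on the right. Each vertex is split into vertices of degree at most `D`. -/
theorem equitable_coloring {A L R : Type*} [Fintype A] [Fintype L] [Fintype R]
    [DecidableEq A] [DecidableEq L] [DecidableEq R] (a : A → L) (b : A → R) (D p q : ℕ)
    (ha : ∀ l, (Finset.univ.filter (fun x => a x = l)).card ≤ D * p)
    (hb : ∀ l, (Finset.univ.filter (fun x => b x = l)).card ≤ D * q) :
    ∃ c : A → Fin D,
      (∀ l i, (Finset.univ.filter (fun x => a x = l ∧ c x = i)).card ≤ p) ∧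
      (∀ l i, (Finset.univ.filter (fun x => b x = l ∧ c x = i)).card ≤ q) := by
  obtain ⟨h, hh⟩ := exists_chunks a D p ha
  obtain ⟨g, hg⟩ := exists_chunks b D q hb
  obtain ⟨c, hc1, hc2⟩ := koenig_coloring (fun x => (a x, h x)) (fun x => (b x, g x)) D hh hg
  refine ⟨c, ?_, ?_⟩
  · intro l i
    rw [← Fintype.card_fin p, ← Finset.card_univ]
    refine Finset.card_le_card_of_injOn h (fun _ _ => by simp) ?_
    intro x hx y hy hxy
    simp at hx hy
    exact hc1 x y (by rw [hx.2, hy.2]) (by simp [hx.1, hy.1, hxy])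
  · intro l i
    rw [← Fintype.card_fin q, ← Finset.card_univ]
    refine Finset.card_le_card_of_injOn g (fun _ _ => by simp) ?_
    intro x hx y hy hxy
    simp at hx hy
    exact hc2 x y (by rw [hx.2, hy.2]) (by simp [hx.1, hy.1, hxy])

/-! ### Layouts: arranging the vertices along lines so that hyperedges are locally connected -/

/-- Positions `(line, place)` lie on the same line at distance at most `B`. -/
def PosClose {L : Type*} (B : ℕ) (p q : L × ℕ) : Prop :=
  p.1 = q.1 ∧ p.2 ≤ q.2 + B ∧ q.2 ≤ p.2 + B

theorem PosClose.symm {L : Type*} {B : ℕ} {p q : L × ℕ} (h : PosClose B p q) : PosClose B q p :=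
  ⟨h.1.symm, h.2.2, h.2.1⟩

theorem PosClose.mono {L : Type*} {B B' : ℕ} {p q : L × ℕ} (h : PosClose B p q) (hB : B ≤ B') :
    PosClose B' p q :=
  ⟨h.1, h.2.1.trans (by omega), h.2.2.trans (by omega)⟩

/-- `equitable_coloring` for the incidences between the vertices and edges of a hypergraph. -/
theorem incidence_coloring {V : Type*} [Fintype V] [DecidableEq V] (E : Finset (Finset V))
    (r d D p q : ℕ) (hD : 0 < D) (hE : ∀ e ∈ E, e.card = r)
    (hd : ∀ v : V, (E.filter (fun e => v ∈ e)).card ≤ d) (hp : d ≤ D * p) (hq : r ≤ D * q) :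
    ∃ col : V → Finset V → Fin D,
      (∀ v i, (E.filter (fun e => v ∈ e ∧ col v e = i)).card ≤ p) ∧
      (∀ e ∈ E, ∀ i, (e.filter (fun v => col v e = i)).card ≤ q) := by
  classical
  let A := {x : V × E // x.1 ∈ x.2.1}
  obtain ⟨c, hc1, hc2⟩ := equitable_coloring (fun x : A => x.1.1) (fun x : A => x.1.2) D p q
    (by
      intro v
      refine le_trans ?_ ((hd v).trans hp)
      refine Finset.card_le_card_of_injOn (fun x => x.1.2.1) ?_ ?_
      · rintro ⟨⟨u, e⟩, hx⟩ h
        simp at h hx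
        subst h
        simp [hx]
      · rintro ⟨⟨u, e⟩, hx⟩ h ⟨⟨u', e'⟩, hx'⟩ h' hh
        simp at h h' hh
        subst h; subst h'
        have : e = e' := hh
        subst this
        rfl)
    (by
      intro e
      refine le_trans ?_ ((hE e.1 e.2).le.trans hq)
      refine Finset.card_le_card_of_injOn (fun x => x.1.1) ?_ ?_
      · rintro ⟨⟨u, e⟩, hx⟩ h
        simp at h hx
        subst h
        simp [hx]
      · rintro ⟨⟨u, e⟩, hx⟩ h ⟨⟨u', e'⟩, hx'⟩ h' hh
        simp at h h' hh
        subst h; subst h'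
        simp [hh])
  refine ⟨fun v e => if h : e ∈ E ∧ v ∈ e then c ⟨(v, ⟨e, h.1⟩), h.2⟩ else ⟨0, hD⟩, ?_, ?_⟩
  · intro v i
    refine le_trans ?_ (hc1 v i)
    refine Finset.card_le_card_of_surjOn (fun x => x.1.2.1) ?_
    intro e he
    simp only [Finset.coe_filter, Set.mem_ofPred_eq] at he
    obtain ⟨h1, h2, h3⟩ := he
    rw [dif_pos ⟨h1, h2⟩] at h3
    exact ⟨⟨(v, ⟨e, h1⟩), h2⟩, by simp [h3], rfl⟩
  · intro e he i
    refine le_trans ?_ (hc2 ⟨e, he⟩ i)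
    refine Finset.card_le_card_of_surjOn (fun x => x.1.1) ?_
    intro v hv
    simp only [Finset.coe_filter, Set.mem_ofPred_eq] at hv
    obtain ⟨h2, h3⟩ := hv
    rw [dif_pos ⟨he, h2⟩] at h3
    exact ⟨⟨(v, ⟨e, he⟩), h2⟩, by simp [h3], rfl⟩

/-- The orbits of a permutation can be folded onto lines: each orbit goes to its own line, the
place of `v` being its circular distance to a base point of the orbit. -/
theorem perm_layout {V : Type*} [Fintype V] [DecidableEq V] (π : Equiv.Perm V) :
    ∃ σ : V → V × ℕ, (∀ p, (Finset.univ.filter (fun v => σ v = p)).card ≤ 2) ∧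
      ∀ v, PosClose 1 (σ v) (σ (π v)) := by
  classical
  let ρ : V → V := fun v => (Quotient.mk (Equiv.Perm.SameCycle.setoid π) v).out
  have hρ : ∀ v, ∃ i : ℤ, (π ^ i) (ρ v) = v := fun v =>
    Quotient.exact (Quotient.out_eq (Quotient.mk (Equiv.Perm.SameCycle.setoid π) v))
  have hρπ : ∀ v, ρ (π v) = ρ v := by
    intro v
    have : (Quotient.mk (Equiv.Perm.SameCycle.setoid π) (π v))
        = (Quotient.mk (Equiv.Perm.SameCycle.setoid π) v) := by
      apply Quotient.sound
      exact ⟨-1, by simp⟩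
    simp only [ρ, this]
  have hex : ∀ v, ∃ m : ℕ, ∃ i : ℤ, i.natAbs = m ∧ (π ^ i) (ρ v) = v := by
    intro v
    obtain ⟨i, hi⟩ := hρ v
    exact ⟨_, i, rfl, hi⟩
  let d : V → ℕ := fun v => Nat.find (hex v)
  have hd : ∀ v, ∃ i : ℤ, i.natAbs = d v ∧ (π ^ i) (ρ v) = v := fun v => Nat.find_spec (hex v)
  have hdm : ∀ v (i : ℤ), (π ^ i) (ρ v) = v → d v ≤ i.natAbs := fun v i h =>
    Nat.find_min' (hex v) ⟨i, rfl, h⟩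
  refine ⟨fun v => (ρ v, d v), ?_, ?_⟩
  · rintro ⟨w, m⟩
    have : Finset.univ.filter (fun v => (ρ v, d v) = (w, m))
        ⊆ {(π ^ (m : ℤ)) w, (π ^ (-(m : ℤ))) w} := by
      intro v hv
      simp only [Finset.mem_filter, Finset.mem_univ, true_and, Prod.mk.injEq] at hv
      obtain ⟨i, hi, hv2⟩ := hd v
      rw [hv.1] at hv2
      rw [hv.2] at hi
      have : i = m ∨ i = -m := by omega
      rcases this with rfl | rfl <;> simp [← hv2]
    exact (Finset.card_le_card this).trans Finset.card_le_two
  · intro v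
    refine ⟨(hρπ v).symm, ?_, ?_⟩
    · obtain ⟨i, hi, hv⟩ := hd (π v)
      have := hdm v (i - 1) (by
        rw [← hρπ v, sub_eq_neg_add, zpow_add, Equiv.Perm.mul_apply, hv]; simp)
      simp only
      omega
    · obtain ⟨i, hi, hv⟩ := hd v
      have := hdm (π v) (1 + i) (by
        rw [hρπ v, zpow_add, Equiv.Perm.mul_apply, hv]; simp)
      simp only
      omega

theorem exists_perm_extending {V A : Type*} [Fintype V] [DecidableEq V] [Finite A]
    (t h : A → V) (ht : Function.Injective t) (hh : Function.Injective h) :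
    ∃ π : Equiv.Perm V, ∀ x, π (t x) = h x := by
  classical
  let e : {v // v ∈ Set.range t} ≃ {v // v ∈ Set.range h} :=
    (Equiv.ofInjective t ht).symm.trans (Equiv.ofInjective h hh)
  refine ⟨e.extendSubtype, fun x => ?_⟩
  rw [Equiv.extendSubtype_apply_of_mem e (t x) ⟨x, rfl⟩]
  have : (⟨t x, ⟨x, rfl⟩⟩ : {v // v ∈ Set.range t}) = Equiv.ofInjective t ht x := rfl
  rw [this]
  simp [e]

/-- In an `r`-uniform hypergraph of maximum degree at most `r * q`, the vertices of all edges can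
be labelled `0, …, r - 1` so that no vertex has the same label in more than `q` edges. -/
theorem exists_labels {V : Type*} [Fintype V] [DecidableEq V] (E : Finset (Finset V))
    (r q : ℕ) (hr : 0 < r) (hE : ∀ e ∈ E, e.card = r)
    (hd : ∀ v : V, (E.filter (fun e => v ∈ e)).card ≤ r * q) :
    ∃ vert : E → Fin r → V, (∀ e c, vert e c ∈ e.1) ∧ (∀ e, Function.Injective (vert e)) ∧
      ∀ v c, (Finset.univ.filter (fun e : E => vert e c = v)).card ≤ q := by
  obtain ⟨col, hc1, hc2⟩ := incidence_coloring E r (r * q) r q 1 hr hE hd le_rfl (by simp)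
  have hs : ∀ (e : E) (c : Fin r), ∃ v ∈ e.1, col v e.1 = c := by
    intro e
    have hinj : Set.InjOn (fun v => col v e.1) e.1 := by
      intro v hv w hw h
      have := hc2 e.1 e.2 (col v e.1)
      rw [Finset.card_le_one] at this
      exact this v (by simp at hv ⊢; exact hv) w (by simp at hw h ⊢; exact ⟨hw, h.symm⟩)
    have := Finset.surj_on_of_inj_on_of_card_le (s := e.1) (t := Finset.univ)
      (fun v _ => col v e.1) (fun _ _ => Finset.mem_univ _)
      (fun v w hv hw h => hinj hv hw h) (by simp [hE e.1 e.2])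
    intro c
    obtain ⟨v, hv, h⟩ := this c (Finset.mem_univ _)
    exact ⟨v, hv, h.symm⟩
  choose vert hv1 hv2 using hs
  refine ⟨vert, hv1, ?_, ?_⟩
  · intro e c c' h
    rw [← hv2 e c, h, hv2 e c']
  · intro v c
    refine le_trans ?_ (hc1 v c)
    refine Finset.card_le_card_of_injOn (fun e => e.1) ?_ ?_
    · intro e he
      simp at he ⊢
      refine ⟨?_, ?_⟩
      · rw [← he]; exact hv1 e c
      · rw [← he]; exact hv2 e c
    · intro e _ e' _ h
      exact Subtype.ext h

/-- Layout in the tight case `r ∣ Δ`, `Δ = r * q`, `r = 2 * m + 1`. Every edge carries `m + 1` arcs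
forming a star with two leaves and a matching; the arcs of one colour class form a partial
injection, hence part of a permutation, which `perm_layout` lays out. -/
theorem layout_tight (m q : ℕ) (hm : 0 < m) {V : Type} [Fintype V] [DecidableEq V]
    (E : Finset (Finset V))
    (hE : ∀ e ∈ E, e.card = 2 * m + 1)
    (hd : ∀ v : V, (E.filter (fun e => v ∈ e)).card ≤ (2 * m + 1) * q) :
    ∃ σ : Fin ((m + 1) * q) → V → V × ℕ,
      (∀ i p, (Finset.univ.filter (fun v => σ i v = p)).card ≤ 2) ∧
      ∀ e ∈ E, ∃ N : Fin ((m + 1) * q) → Finset V,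
        (∀ i, N i ⊆ e ∧ ∀ v ∈ N i, ∃ u ∈ e \ N i, PosClose 1 (σ i v) (σ i u)) ∧
        m + 1 ≤ ∑ i, (N i).card := by
  classical
  obtain ⟨vert, hv1, hv2, hv3⟩ := exists_labels E (2 * m + 1) q (by omega) hE hd
  let tl : Fin (m + 1) → Fin (2 * m + 1) := fun j => ⟨2 * j, by omega⟩
  let hl : Fin (m + 1) → Fin (2 * m + 1) := fun j =>
    if h : j.1 < m then ⟨2 * j + 1, by omega⟩ else ⟨0, by omega⟩
  have hcount : ∀ (τ : Fin (m + 1) → Fin (2 * m + 1)) (v : V),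
      (Finset.univ.filter (fun x : E × Fin (m + 1) => vert x.1 (τ x.2) = v)).card
        ≤ (m + 1) * q := by
    intro τ v
    rw [Finset.card_filter, Fintype.sum_prod_type_right]
    calc _ ≤ ∑ _j : Fin (m + 1), q := by
          apply Finset.sum_le_sum
          intro j _
          rw [← Finset.card_filter]
          exact hv3 v (τ j)
      _ = _ := by simp
  obtain ⟨col, hc1, hc2⟩ := koenig_coloring (fun x : E × Fin (m + 1) => vert x.1 (tl x.2))
    (fun x : E × Fin (m + 1) => vert x.1 (hl x.2)) ((m + 1) * q) (hcount tl) (hcount hl)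
  have hπ : ∀ i, ∃ π : Equiv.Perm V, ∀ x : {x : E × Fin (m + 1) // col x = i},
      π (vert x.1.1 (tl x.1.2)) = vert x.1.1 (hl x.1.2) := by
    intro i
    apply exists_perm_extending
    · intro x y h
      exact Subtype.ext (hc1 x.1 y.1 (x.2.trans y.2.symm) h)
    · intro x y h
      exact Subtype.ext (hc2 x.1 y.1 (x.2.trans y.2.symm) h)
  choose π hπ using hπ
  choose σ hσ1 hσ2 using fun i => perm_layout (π i)
  refine ⟨σ, hσ1, ?_⟩
  intro e he
  -- `nr j` is the leaf of the arc `j`, and `rt j` its other end, which is a leaf of no arc.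
  let nr : Fin (m + 1) → Fin (2 * m + 1) := fun j =>
    if h : j.1 < m then ⟨2 * j + 1, by omega⟩ else ⟨2 * m, by omega⟩
  let rt : Fin (m + 1) → Fin (2 * m + 1) := fun j =>
    if h : j.1 < m then ⟨2 * j, by omega⟩ else ⟨0, by omega⟩
  have hnr : Function.Injective nr := by
    intro i j h
    have h' := congrArg Fin.val h
    have hi := i.2
    have hj := j.2
    apply Fin.ext
    simp only [nr] at h'
    split_ifs at h' <;> simp only at h' <;> omega
  have hnrt : ∀ i j, nr i ≠ rt j := by
    intro i j h
    have h' := congrArg Fin.val h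
    have hi := i.2
    have hj := j.2
    simp only [nr, rt] at h'
    split_ifs at h' <;> simp only at h' <;> omega
  have hpc : ∀ j, PosClose 1 (σ (col (⟨e, he⟩, j)) (vert ⟨e, he⟩ (nr j)))
      (σ (col (⟨e, he⟩, j)) (vert ⟨e, he⟩ (rt j))) := by
    intro j
    have h1 := hσ2 (col (⟨e, he⟩, j)) (vert ⟨e, he⟩ (tl j))
    rw [hπ _ ⟨(⟨e, he⟩, j), rfl⟩] at h1
    by_cases hj : j.1 < m
    · have e1 : nr j = hl j := by simp [nr, hl, hj]
      have e2 : rt j = tl j := by simp [rt, tl, hj]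
      rw [e1, e2]
      exact h1.symm
    · have e0 : j.1 = m := by omega
      have e1 : nr j = tl j := by simp [nr, tl, e0]
      have e2 : rt j = hl j := by simp [rt, hl, hj]
      rw [e1, e2]
      exact h1
  let N : Fin ((m + 1) * q) → Finset V := fun i =>
    (Finset.univ.filter (fun j => col (⟨e, he⟩, j) = i)).image (fun j => vert ⟨e, he⟩ (nr j))
  refine ⟨N, ?_, ?_⟩
  · intro i
    refine ⟨?_, ?_⟩
    · intro v hv
      obtain ⟨j, -, rfl⟩ := Finset.mem_image.1 hv
      exact hv1 _ _
    · intro v hv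
      obtain ⟨j, hj, rfl⟩ := Finset.mem_image.1 hv
      have hj' : col (⟨e, he⟩, j) = i := by simpa using hj
      refine ⟨vert ⟨e, he⟩ (rt j), ?_, ?_⟩
      · refine Finset.mem_sdiff.2 ⟨hv1 _ _, fun hc => ?_⟩
        obtain ⟨j', -, h⟩ := Finset.mem_image.1 hc
        exact hnrt _ _ (hv2 _ h)
      · subst hj'
        exact hpc j
  · have : ∀ i, (N i).card = (Finset.univ.filter (fun j => col (⟨e, he⟩, j) = i)).card := fun i =>
      Finset.card_image_of_injective _ ((hv2 _).comp hnr)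
    simp only [this]
    rw [← Finset.card_eq_sum_card_fiberwise (fun x _ => Finset.mem_coe.2 (Finset.mem_univ _))]
    simp

/-! ### Cutting the graph of a function into bounded pieces -/

theorem card_iterate_fiber_le {V : Type*} [Fintype V] [DecidableEq V] (g : V → V) (d : ℕ)
    (hg : ∀ w, (Finset.univ.filter (fun v => g v = w)).card ≤ d) (j : ℕ) (w : V) :
    (Finset.univ.filter (fun v => g^[j] v = w)).card ≤ d ^ j := by
  induction j generalizing w with
  | zero =>
    rw [pow_zero, Finset.card_le_one]
    intro a ha b hb
    exact (Finset.mem_filter.1 ha).2.trans (Finset.mem_filter.1 hb).2.symm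
  | succ j ih =>
    have : Finset.univ.filter (fun v => g^[j + 1] v = w) ⊆
        (Finset.univ.filter (fun u => g^[j] u = w)).biUnion
          (fun u => Finset.univ.filter (fun v => g v = u)) := by
      intro v hv
      have hv' : g^[j] (g v) = w := (Finset.mem_filter.1 hv).2
      simpa using hv'
    refine (Finset.card_le_card this).trans ?_
    refine (Finset.card_biUnion_le_card_mul _ _ d (fun u _ => hg u)).trans ?_
    rw [pow_succ]
    exact Nat.mul_le_mul_right _ (ih w)

/-- Every orbit of a self-map of a finite set runs into a canonical point, the same for all points
of a component. -/
theorem exists_root {V : Type*} [Finite V] (g : V → V) :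
    ∃ ρ : V → V, (∀ v, ρ (g v) = ρ v) ∧ ∀ v, ∃ j, g^[j] v = ρ v := by
  classical
  let I : V → V → Prop := fun v w => ∀ M : ℕ, ∃ j ≥ M, g^[j] v = w
  have hI : ∀ v, I (g v) = I v := by
    intro v
    funext w
    apply propext
    constructor
    · intro h M
      obtain ⟨j, hj, hw⟩ := h M
      exact ⟨j + 1, by omega, by simpa using hw⟩
    · intro h M
      obtain ⟨j, hj, hw⟩ := h (M + 1)
      obtain ⟨j, rfl⟩ : ∃ j', j = j' + 1 := ⟨j - 1, by omega⟩
      exact ⟨j, by omega, by simpa using hw⟩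
  have hne : ∀ v, ∃ w, I v w := by
    intro v
    obtain ⟨w, hw⟩ := Finite.exists_infinite_fiber (fun j : ℕ => g^[j] v)
    refine ⟨w, fun M => ?_⟩
    rw [Set.infinite_coe_iff] at hw
    obtain ⟨j, hj, hM⟩ := hw.exists_gt M
    exact ⟨j, hM.le, hj⟩
  refine ⟨fun v => @Classical.epsilon V ⟨v⟩ (I v), ?_, ?_⟩
  · intro v
    simp only [hI]
  · intro v
    have := @Classical.epsilon_spec_aux V ⟨v⟩ (I v) (hne v)
    obtain ⟨j, -, hj⟩ := this 0
    exact ⟨j, hj⟩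

/-- The arcs `v → g v` can be sorted into `p` classes such that deleting any one class leaves
components of bounded size; `R c v` names the component of `v` after deleting class `c`. -/
theorem functional_cut {V : Type*} [Fintype V] [DecidableEq V] (g : V → V) (d p : ℕ) (hp : 0 < p)
    (hg : ∀ w, (Finset.univ.filter (fun v => g v = w)).card ≤ d) :
    ∃ (h : V → ℕ) (R : ℕ → V → V), (∀ c v, h v % p ≠ c → R c v = R c (g v)) ∧
      ∀ c < p, ∀ w, (Finset.univ.filter (fun v => R c v = w)).card
        ≤ ∑ j ∈ Finset.range (2 * p), d ^ j := by
  classical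
  obtain ⟨ρ, hρg, hρ⟩ := exists_root g
  -- `h v` is the number of steps from `v` to the root of its component.
  let h : V → ℕ := fun v => Nat.find (hρ v)
  have hh : ∀ v, g^[h v] v = ρ v := fun v => Nat.find_spec (hρ v)
  have hmin : ∀ v j, g^[j] v = ρ v → h v ≤ j := fun v j hj => Nat.find_min' (hρ v) hj
  have hstep : ∀ v, 0 < h v → h (g v) + 1 = h v := by
    intro v hv
    apply le_antisymm
    · have : h (g v) ≤ h v - 1 := by
        apply hmin
        rw [hρg, ← hh v, ← Function.iterate_succ_apply]
        congr 2
        omega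
      omega
    · apply hmin
      rw [Function.iterate_succ_apply, hh, hρg]
  have hdown : ∀ i v, i ≤ h v → h (g^[i] v) + i = h v := by
    intro i
    induction i with
    | zero => intro v _; simp
    | succ i ih =>
      intro v hv
      rw [Function.iterate_succ_apply]
      have h1 := hstep v (by omega)
      have := ih (g v) (by omega)
      omega
  have hhit : ∀ c < p, ∀ v, p ≤ h v → ∃ i < p, h (g^[i] v) % p = c := by
    intro c hc v hv
    have hm := Nat.mod_lt (h v) hp
    have hdm := Nat.div_add_mod (h v) p
    have hq : 1 ≤ h v / p := by rwa [Nat.one_le_div_iff hp]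
    by_cases hcm : c ≤ h v % p
    · refine ⟨h v % p - c, by omega, ?_⟩
      have := hdown (h v % p - c) v (by omega)
      have e : h (g^[h v % p - c] v) = p * (h v / p) + c := by omega
      rw [e, Nat.mul_add_mod, Nat.mod_eq_of_lt hc]
    · refine ⟨h v % p + p - c, by omega, ?_⟩
      have := hdown (h v % p + p - c) v (by omega)
      obtain ⟨Q, hQ⟩ : ∃ Q, h v / p = Q + 1 := ⟨h v / p - 1, by omega⟩
      rw [hQ, mul_add] at hdm
      have e : h (g^[h v % p + p - c] v) = p * Q + c := by omega
      rw [e, Nat.mul_add_mod, Nat.mod_eq_of_lt hc]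
  -- `R c v` is the first point on the orbit of `v` whose outgoing arc has class `c`, and the root if
  -- there is none.
  let R : ℕ → V → V := fun c v =>
    if H : ∃ j, h (g^[j] v) % p = c then g^[Nat.find H] v else ρ v
  refine ⟨h, R, ?_, ?_⟩
  · intro c v hv
    by_cases H : ∃ j, h (g^[j] v) % p = c
    · have H' : ∃ j, h (g^[j] (g v)) % p = c := by
        obtain ⟨j, hj⟩ := H
        cases j with
        | zero => exact absurd hj hv
        | succ j => exact ⟨j, by simpa using hj⟩
      have e : Nat.find H = Nat.find H' + 1 := by
        apply Nat.find_comp_succ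
        simpa using hv
      simp only [R]
      rw [dif_pos H, dif_pos H', e, Function.iterate_succ_apply]
    · have H' : ¬ ∃ j, h (g^[j] (g v)) % p = c := by
        rintro ⟨j, hj⟩
        exact H ⟨j + 1, by simpa using hj⟩
      simp only [R]
      rw [dif_neg H, dif_neg H', hρg]
  · intro c hc w
    have key : ∀ v, ∃ j < 2 * p, g^[j] v = R c v := by
      intro v
      by_cases H : ∃ j, h (g^[j] v) % p = c
      · refine ⟨Nat.find H, ?_, by simp only [R]; rw [dif_pos H]⟩
        by_contra hJ
        push Not at hJ
        have hno : ∀ i, i < Nat.find H → h (g^[i] v) % p ≠ c := fun i hi => Nat.find_min H hi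
        have hv : h v < p := by
          by_contra hv
          obtain ⟨i, hi, hic⟩ := hhit c hc v (by omega)
          exact hno i (by omega) hic
        have hy : h (g (ρ v)) < p := by
          by_contra hy
          obtain ⟨i, hi, hic⟩ := hhit c hc (g (ρ v)) (by omega)
          refine hno (i + (h v + 1)) (by omega) ?_
          rw [Function.iterate_add_apply, Function.iterate_succ_apply', hh]
          exact hic
        have hρρ : ρ (ρ v) = ρ v := by
          have : ∀ m, ρ (g^[m] v) = ρ v := by
            intro m
            induction m with
            | zero => rfl
            | succ m ih => rw [Function.iterate_succ_apply', hρg, ih]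
          conv_lhs => rw [← hh v]
          exact this _
        -- The root is periodic, so a first hit beyond one period would have an earlier copy.
        have hper : g^[h (g (ρ v)) + 1] (ρ v) = ρ v := by
          rw [Function.iterate_succ_apply, hh, hρg, hρρ]
        refine hno (Nat.find H - (h (g (ρ v)) + 1)) (by omega) ?_
        have hs := Nat.find_spec H
        have e1 : g^[Nat.find H] v = g^[Nat.find H - (h (g (ρ v)) + 1)] v := by
          have a1 : Nat.find H = (Nat.find H - (h (g (ρ v)) + 1) - h v)
              + ((h (g (ρ v)) + 1) + h v) := by omega
          have a2 : Nat.find H - (h (g (ρ v)) + 1)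
              = (Nat.find H - (h (g (ρ v)) + 1) - h v) + h v := by omega
          conv_lhs => rw [a1]
          conv_rhs => rw [a2]
          rw [Function.iterate_add_apply _ _ (h (g (ρ v)) + 1 + h v),
            Function.iterate_add_apply _ (h (g (ρ v)) + 1) (h v),
            Function.iterate_add_apply _ _ (h v), hh, hper]
        rw [← e1]
        exact hs
      · refine ⟨h v, ?_, by simp only [R]; rw [dif_neg H, hh]⟩
        by_contra hv
        obtain ⟨i, hi, hic⟩ := hhit c hc v (by omega)
        exact H ⟨i, hic⟩
    have : Finset.univ.filter (fun v => R c v = w) ⊆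
        (Finset.range (2 * p)).biUnion (fun j => Finset.univ.filter (fun v => g^[j] v = w)) := by
      intro v hv
      obtain ⟨j, hj, hjv⟩ := key v
      simp at hv ⊢
      exact ⟨j, hj, hjv.trans hv⟩
    refine (Finset.card_le_card this).trans ?_
    refine Finset.card_biUnion_le.trans ?_
    exact Finset.sum_le_sum (fun j _ => card_iterate_fiber_le g d hg j w)

/-- Layout in the slack case `(r + 1) * Δ < k * r`: incidences are coloured with `Δ` colours, each
colour class is the graph of a function, and each such function is cut in `k * r` ways. -/
theorem layout_slack (r d k : ℕ) (hr : 3 ≤ r) (hd2 : 2 ≤ d) (hk : (r + 1) * d < k * r)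
    {V : Type} [Fintype V] [DecidableEq V] (E : Finset (Finset V))
    (hE : ∀ e ∈ E, e.card = r) (hd : ∀ v : V, (E.filter (fun e => v ∈ e)).card ≤ d) :
    ∃ σ : Fin (d * (k * r)) → V → V × ℕ,
      (∀ i p, (Finset.univ.filter (fun v => σ i v = p)).card
        ≤ ∑ j ∈ Finset.range (2 * (k * r)), (1 + d * r) ^ j) ∧
      ∀ e ∈ E, ∃ N : Fin (d * (k * r)) → Finset V,
        (∀ i, N i ⊆ e ∧ ∀ v ∈ N i, ∃ u ∈ e \ N i, PosClose 1 (σ i v) (σ i u)) ∧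
        d * (k * r) * (r + 1) ≤ k * ∑ i, (N i).card := by
  classical
  have hp : 0 < k * r := by omega
  obtain ⟨col, hc1, hc2⟩ := incidence_coloring E r d d 1 (r - 1) (by omega) hE hd (by omega) (by
    obtain ⟨a, rfl⟩ : ∃ a, r = a + 1 := ⟨r - 1, by omega⟩
    simp
    nlinarith)
  have hz : ∀ (e : E) (i : Fin d), ∃ z ∈ e.1, col z e.1 ≠ i := by
    intro e i
    by_contra hcon
    push Not at hcon
    have := hc2 e.1 e.2 i
    rw [Finset.filter_true_of_mem hcon, hE e.1 e.2] at this
    omega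
  choose z hz1 hz2 using hz
  -- A vertex whose incidence with `e` has colour `i` is sent to a vertex of `e` of another colour.
  let g : Fin d → V → V := fun i v =>
    if H : ∃ e : E, v ∈ e.1 ∧ col v e.1 = i then z H.choose i else v
  have hg : ∀ (e : E) (i : Fin d) (v : V), v ∈ e.1 → col v e.1 = i → g i v = z e i := by
    intro e i v hv hvi
    have H : ∃ e : E, v ∈ e.1 ∧ col v e.1 = i := ⟨e, hv, hvi⟩
    have : H.choose = e := by
      have h1 := hc1 v i
      rw [Finset.card_le_one] at h1
      apply Subtype.ext
      apply h1
      · simp only [Finset.mem_filter]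
        exact ⟨H.choose.2, H.choose_spec⟩
      · simp only [Finset.mem_filter]
        exact ⟨e.2, hv, hvi⟩
    simp only [g]
    rw [dif_pos H, this]
  have hgd : ∀ i w, (Finset.univ.filter (fun v => g i v = w)).card ≤ 1 + d * r := by
    intro i w
    have : Finset.univ.filter (fun v => g i v = w) ⊆
        {w} ∪ (E.filter (fun e => w ∈ e)).biUnion id := by
      intro v hv
      simp only [Finset.mem_filter, Finset.mem_univ, true_and] at hv
      by_cases H : ∃ e : E, v ∈ e.1 ∧ col v e.1 = i
      · obtain ⟨e, hv1, hv2⟩ := H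
        rw [hg e i v hv1 hv2] at hv
        apply Finset.mem_union_right
        rw [Finset.mem_biUnion]
        refine ⟨e.1, ?_, hv1⟩
        rw [Finset.mem_filter]
        exact ⟨e.2, hv ▸ hz1 e i⟩
      · simp only [g] at hv
        rw [dif_neg H] at hv
        simp [hv]
    refine (Finset.card_le_card this).trans ((Finset.card_union_le _ _).trans ?_)
    rw [Finset.card_singleton]
    refine Nat.add_le_add_left ?_ _
    refine (Finset.card_biUnion_le_card_mul _ _ r ?_).trans (Nat.mul_le_mul_right _ (hd w))
    intro e he
    rw [Finset.mem_filter] at he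
    exact (hE e he.1).le
  choose h R hR1 hR2 using fun i => functional_cut (g i) (1 + d * r) (k * r) hp (hgd i)
  let ix : Fin (d * (k * r)) ≃ Fin d × Fin (k * r) := finProdFinEquiv.symm
  refine ⟨fun x v => (R (ix x).1 (ix x).2 v, 0), ?_, ?_⟩
  · rintro x ⟨w, m⟩
    refine le_trans (Finset.card_le_card ?_) (hR2 (ix x).1 (ix x).2 (ix x).2.2 w)
    intro v hv
    simp only [Finset.mem_filter, Finset.mem_univ, true_and, Prod.mk.injEq] at hv ⊢
    exact hv.1
  · intro e he
    refine ⟨fun x => e.filter (fun v => col v e = (ix x).1 ∧ h (ix x).1 v % (k * r) ≠ (ix x).2),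
      ?_, ?_⟩
    · intro x
      refine ⟨Finset.filter_subset _ _, ?_⟩
      intro v hv
      rw [Finset.mem_filter] at hv
      refine ⟨z ⟨e, he⟩ (ix x).1, ?_, ?_⟩
      · rw [Finset.mem_sdiff, Finset.mem_filter]
        exact ⟨hz1 ⟨e, he⟩ _, fun hc => hz2 ⟨e, he⟩ _ hc.2.1⟩
      · refine ⟨?_, by simp, by simp⟩
        simp only
        rw [hR1 _ _ _ hv.2.2, hg ⟨e, he⟩ _ v hv.1 hv.2.1]
    · have hsum : ∑ x, (e.filter (fun v => col v e = (ix x).1 ∧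
          h (ix x).1 v % (k * r) ≠ (ix x).2)).card = r * (k * r - 1) := by
        simp only [Finset.card_filter]
        rw [Finset.sum_comm]
        have hconst : r * (k * r - 1) = ∑ _v ∈ e, (k * r - 1) := by
          rw [Finset.sum_const, hE e he, smul_eq_mul]
        rw [hconst]
        apply Finset.sum_congr rfl
        intro v _
        rw [Equiv.sum_comp ix (fun y => if col v e = y.1 ∧ h y.1 v % (k * r) ≠ y.2 then 1 else 0)]
        rw [Fintype.sum_prod_type, Finset.sum_eq_single (col v e)]
        · simp only [true_and]
          rw [← Finset.card_filter]
          have : (Finset.univ.filter fun y : Fin (k * r) => h (col v e) v % (k * r) ≠ y)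
              = Finset.univ.erase ⟨h (col v e) v % (k * r), Nat.mod_lt _ hp⟩ := by
            ext y
            simp [Fin.ext_iff, eq_comm]
          rw [this, Finset.card_erase_of_mem (Finset.mem_univ _)]
          simp
        · intro b _ hb
          simp [hb.symm]
        · simp
      rw [hsum]
      have : (r + 1) * d ≤ k * r - 1 := by omega
      calc d * (k * r) * (r + 1) = k * (r * ((r + 1) * d)) := by ring
        _ ≤ k * (r * (k * r - 1)) := by gcongr

/-- Both cases together, with `k` standing for `Δ'`. -/
theorem exists_layout (r d k : ℕ) (hr : 3 ≤ r) (hro : Odd r) (hd2 : 2 ≤ d)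
    (hk : (r + 1) * d ≤ k * r) :
    ∃ s B : ℕ, 0 < s ∧ ∀ (V : Type) [Fintype V] [DecidableEq V] (E : Finset (Finset V)),
      (∀ e ∈ E, e.card = r) → (∀ v : V, (E.filter (fun e => v ∈ e)).card ≤ d) →
      ∃ σ : Fin s → V → V × ℕ,
        (∀ i p, (Finset.univ.filter (fun v => σ i v = p)).card ≤ B) ∧
        ∀ e ∈ E, ∃ N : Fin s → Finset V,
          (∀ i, N i ⊆ e ∧ ∀ v ∈ N i, ∃ u ∈ e \ N i, PosClose 1 (σ i v) (σ i u)) ∧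
          s * (r + 1) ≤ k * ∑ i, (N i).card := by
  have hk0 : 0 < k := by
    rcases Nat.eq_zero_or_pos k with rfl | h
    · have : 0 < (r + 1) * d := by positivity
      omega
    · exact h
  rcases hk.lt_or_eq with hlt | heq
  · exact ⟨d * (k * r), _, by positivity, fun V _ _ E hE hd =>
      layout_slack r d k hr hd2 hlt E hE hd⟩
  · obtain ⟨m, rfl⟩ := hro
    have hdvd : (2 * m + 1) ∣ d := by
      have h1 : (2 * m + 1) ∣ (2 * m + 1 + 1) * d := heq ▸ Dvd.intro_left k rfl
      exact (Nat.Coprime.dvd_of_dvd_mul_left (by simp) h1)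
    obtain ⟨q, rfl⟩ := hdvd
    have hq : 0 < q := by
      rcases Nat.eq_zero_or_pos q with rfl | h
      · simp at hd2
      · exact h
    have hkq : k = (2 * m + 1 + 1) * q := by
      apply Nat.eq_of_mul_eq_mul_right (show 0 < 2 * m + 1 by omega)
      rw [← heq]; ring
    refine ⟨(m + 1) * q, 2, by positivity, fun V _ _ E hE hd => ?_⟩
    obtain ⟨σ, h1, h2⟩ := layout_tight m q (by omega) E hE hd
    refine ⟨σ, h1, fun e he => ?_⟩
    obtain ⟨N, hN1, hN2⟩ := h2 e he
    refine ⟨N, hN1, ?_⟩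
    calc (m + 1) * q * (2 * m + 1 + 1) = k * (m + 1) := by rw [hkq]; ring
      _ ≤ _ := by gcongr

/-! ### A bounded-degree graph with vertex expansion on any finite set -/

theorem two_pow_le_choose {N y : ℕ} (h : 2 * y ≤ N) : 2 ^ y ≤ N.choose y := by
  refine le_trans ?_ (Nat.choose_le_choose y h)
  change 2 ^ y ≤ Nat.centralBinom y
  clear h
  induction y with
  | zero => simp
  | succ y ih =>
    have h := Nat.succ_mul_centralBinom_succ y
    have : (y + 1) * (2 * Nat.centralBinom y) ≤ (y + 1) * Nat.centralBinom (y + 1) := by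
      rw [h]
      nlinarith
    have := Nat.le_of_mul_le_mul_left this (by omega)
    rw [pow_succ]
    omega

theorem choose_le_choose_left {N a b : ℕ} (hab : a ≤ b) (hb : b ≤ N / 2) :
    N.choose a ≤ N.choose b := by
  induction b, hab using Nat.le_induction with
  | base => exact le_rfl
  | succ b _ ih => exact (ih (by omega)).trans (Nat.choose_le_succ_of_lt_half_left (by omega))

theorem choose_add_sq_le {y w : ℕ} (h : 10 * w ≤ y) : (y + w).choose w ^ 2 ≤ 2 ^ y := by
  have h1 : (y + w).choose w * 10 ^ y ≤ 11 ^ (y + w) := by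
    have := add_pow 1 10 (y + w)
    norm_num at this
    rw [this]
    have h2 := Finset.single_le_sum (f := fun m => 10 ^ (y + w - m) * (y + w).choose m)
      (fun _ _ => Nat.zero_le _) (Finset.mem_range.2 (by omega : w < y + w + 1))
    simpa [mul_comm] using h2
  have h3 : ((y + w).choose w ^ 2) ^ 5 * (10 ^ 10) ^ y ≤ (2 ^ y) ^ 5 * (10 ^ 10) ^ y := by
    calc ((y + w).choose w ^ 2) ^ 5 * (10 ^ 10) ^ y
        = ((y + w).choose w * 10 ^ y) ^ 10 := by rw [mul_pow, ← pow_mul, ← pow_mul, ← pow_mul]; ring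
      _ ≤ (11 ^ (y + w)) ^ 10 := by gcongr
      _ = 11 ^ (10 * y + 10 * w) := by rw [← pow_mul]; ring_nf
      _ ≤ 11 ^ (11 * y) := Nat.pow_le_pow_right (by norm_num) (by omega)
      _ = (11 ^ 11) ^ y := by rw [pow_mul]
      _ ≤ (2 ^ 5 * 10 ^ 10) ^ y := by gcongr; norm_num
      _ = _ := by rw [mul_pow, ← pow_mul, ← pow_mul, ← pow_mul]; ring
  have h4 := Nat.le_of_mul_le_mul_right h3 (by positivity)
  exact le_of_pow_le_pow_left₀ (by norm_num) (by positivity) h4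

/-- The number of permutations mapping `Y` into `U`, as a fraction of all of them. -/
theorem card_perm_mapsTo {X : Type*} [Fintype X] [DecidableEq X] (Y U : Finset X) :
    (Finset.univ.filter (fun π : Equiv.Perm X => ∀ x ∈ Y, π x ∈ U)).card
        * (Fintype.card X).choose Y.card
      = U.card.choose Y.card * (Fintype.card X).factorial := by
  classical
  let c : Finset X → ℕ := fun T =>
    (Finset.univ.filter (fun π : Equiv.Perm X => Y.image π = T)).card
  have hc : ∀ T, T.card = Y.card → c T = c Y := by
    intro T hT
    let q : T ≃ Y := Finset.equivOfCardEq hT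
    obtain ⟨τ, hτ⟩ := exists_perm_extending (fun x : T => x.1) (fun x => (q x).1)
      Subtype.val_injective (Subtype.val_injective.comp q.injective)
    have hτT : T.image τ = Y := by
      ext y
      rw [Finset.mem_image]
      constructor
      · rintro ⟨x, hx, rfl⟩
        have := hτ ⟨x, hx⟩
        rw [this]
        exact (q ⟨x, hx⟩).2
      · intro hy
        refine ⟨(q.symm ⟨y, hy⟩).1, (q.symm ⟨y, hy⟩).2, ?_⟩
        rw [hτ]
        simp
    apply Finset.card_bij (fun π _ => τ * π)
    · intro π hπ
      simp only [Finset.mem_filter, Finset.mem_univ, true_and] at hπ ⊢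
      have : Y.image (τ * π) = (Y.image π).image τ := by
        rw [Finset.image_image]
        rfl
      rw [this, hπ, hτT]
    · intro a _ b _ h
      exact mul_left_cancel h
    · intro π hπ
      refine ⟨τ⁻¹ * π, ?_, by simp⟩
      simp only [Finset.mem_filter, Finset.mem_univ, true_and] at hπ ⊢
      apply Finset.image_injective τ.injective
      rw [hτT, ← hπ, Finset.image_image]
      congr 1
      ext x
      simp
  have hsum : ∀ S : Finset X, (Finset.univ.filter (fun π : Equiv.Perm X => ∀ x ∈ Y, π x ∈ S)).card
      = S.card.choose Y.card * c Y := by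
    intro S
    rw [Finset.card_eq_sum_card_fiberwise (f := fun π : Equiv.Perm X => Y.image π)
      (t := S.powersetCard Y.card)]
    · rw [← Finset.card_powersetCard, ← smul_eq_mul, ← Finset.sum_const]
      apply Finset.sum_congr rfl
      intro T hT
      rw [Finset.mem_powersetCard] at hT
      rw [← hc T hT.2, Finset.filter_filter]
      simp only [c]
      congr 1
      ext π
      simp only [Finset.mem_filter, Finset.mem_univ, true_and, and_iff_right_iff_imp]
      rintro rfl x hx
      exact hT.1 (Finset.mem_image_of_mem _ hx)
    · intro π hπ
      simp only [Finset.coe_filter, Finset.mem_univ, true_and, Set.mem_ofPred_eq] at hπ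
      simp only [Finset.mem_coe, Finset.mem_powersetCard]
      refine ⟨?_, Finset.card_image_of_injective _ π.injective⟩
      intro y hy
      obtain ⟨x, hx, rfl⟩ := Finset.mem_image.1 hy
      exact hπ x hx
  have huniv := hsum Finset.univ
  simp only [Finset.mem_univ, implies_true, Finset.filter_true, Finset.card_univ,
    Fintype.card_perm] at huniv
  rw [hsum, huniv]
  ring

theorem sum_quarter_pow_lt (M : ℕ) : ∑ y ∈ Finset.Icc 1 M, (1 / 4 : ℚ) ^ y < 1 := by
  have : ∑ y ∈ Finset.Icc 1 M, (1 / 4 : ℚ) ^ y ≤ 1 / 3 - 1 / 3 * (1 / 4) ^ M := by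
    induction M with
    | zero => simp
    | succ M ih =>
      rw [Finset.sum_Icc_succ_top (by omega), pow_succ]
      linarith
  have h2 : (0 : ℚ) < (1 / 4) ^ M := by positivity
  linarith

/-- Eight random permutations expand every set of at most half the points by a factor `11/10`. -/
theorem exists_expanding_perms (X : Type*) [Fintype X] [DecidableEq X] :
    ∃ π : Fin 8 → Equiv.Perm X, ∀ Y : Finset X, 2 * Y.card ≤ Fintype.card X →
      11 * Y.card ≤ 10 * (Y ∪ Finset.univ.biUnion (fun j => Y.image (π j))).card := by
  classical
  by_contra hcon
  push Not at hcon
  set N := Fintype.card X with hN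
  -- Non-expansion of `Y` is witnessed by a set `W` of `#Y / 10` extra points such that all eight
  -- permutations map `Y` into `Y ∪ W`.
  let bad : Finset X → Finset X → Finset (Equiv.Perm X) := fun Y W =>
    Finset.univ.filter (fun π => ∀ x ∈ Y, π x ∈ Y ∪ W)
  have hcover : (Finset.univ : Finset (Fin 8 → Equiv.Perm X)) ⊆
      (Finset.Icc 1 (N / 2)).biUnion (fun y => (Finset.univ.powersetCard y).biUnion (fun Y =>
        (Finset.univ.powersetCard (y / 10)).biUnion (fun W =>
          Fintype.piFinset (fun _ => bad Y W)))) := by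
    intro π _
    obtain ⟨Y, hY, hlt⟩ := hcon π
    set G := Y ∪ Finset.univ.biUnion (fun j => Y.image (π j)) with hG
    have hYG : Y ⊆ G := Finset.subset_union_left
    have hcG : (G \ Y).card = G.card - Y.card := Finset.card_sdiff_of_subset hYG
    have hle : Y.card ≤ G.card := Finset.card_le_card hYG
    obtain ⟨W, hW1, hW2⟩ := Finset.exists_superset_card_eq (s := G \ Y) (n := Y.card / 10)
      (by omega) (by omega)
    simp only [Finset.mem_biUnion, Finset.mem_powersetCard, Finset.mem_Icc, Fintype.mem_piFinset]
    refine ⟨Y.card, ⟨by omega, by omega⟩, Y, ⟨Finset.subset_univ _, rfl⟩, W,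
      ⟨Finset.subset_univ _, hW2⟩, ?_⟩
    intro j
    simp only [bad, Finset.mem_filter, Finset.mem_univ, true_and]
    intro x hx
    have hxG : π j x ∈ G := by
      apply Finset.mem_union_right
      rw [Finset.mem_biUnion]
      exact ⟨j, Finset.mem_univ _, Finset.mem_image_of_mem _ hx⟩
    rw [Finset.mem_union]
    by_cases hy : π j x ∈ Y
    · exact Or.inl hy
    · exact Or.inr (hW1 (Finset.mem_sdiff.2 ⟨hxG, hy⟩))
  have hbad : ∀ y ∈ Finset.Icc 1 (N / 2), ∀ Y ∈ Finset.univ.powersetCard y,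
      ∀ W ∈ (Finset.univ : Finset X).powersetCard (y / 10),
      ((Fintype.piFinset (fun _ : Fin 8 => bad Y W)).card : ℚ)
        ≤ (N.factorial : ℚ) ^ 8 * (2 ^ (4 * y) / (N.choose y : ℚ) ^ 8) := by
    intro y hy Y hY W hW
    rw [Finset.mem_Icc] at hy
    rw [Finset.mem_powersetCard] at hY hW
    have hcpos : 0 < N.choose y := Nat.choose_pos (by omega)
    have h1 := card_perm_mapsTo Y (Y ∪ W)
    rw [hY.2, ← hN] at h1
    have h2 : (Y ∪ W).card.choose y ≤ (y + y / 10).choose (y / 10) := by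
      rw [Nat.choose_symm_add.symm]
      apply Nat.choose_le_choose
      have := Finset.card_union_le Y W
      omega
    have h3 : (bad Y W).card * N.choose y ≤ (y + y / 10).choose (y / 10) * N.factorial :=
      h1.le.trans (Nat.mul_le_mul_right _ h2)
    have h4 : ((bad Y W).card * N.choose y) ^ 8 ≤ 2 ^ (4 * y) * N.factorial ^ 8 := by
      calc _ ≤ ((y + y / 10).choose (y / 10) * N.factorial) ^ 8 := by gcongr
        _ = ((y + y / 10).choose (y / 10) ^ 2) ^ 4 * N.factorial ^ 8 := by ring
        _ ≤ (2 ^ y) ^ 4 * N.factorial ^ 8 := Nat.mul_le_mul_right _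
          (Nat.pow_le_pow_left (choose_add_sq_le (Nat.mul_div_le y 10)) 4)
        _ = _ := by rw [← pow_mul, mul_comm y]
    rw [Fintype.card_piFinset]
    simp only [Finset.prod_const, Finset.card_univ, Fintype.card_fin]
    rw [← mul_div_assoc, le_div_iff₀ (by positivity)]
    rw [mul_pow] at h4
    rw [mul_comm ((N.factorial : ℚ) ^ 8)]
    exact_mod_cast h4
  have htot : ((N.factorial : ℚ)) ^ 8 ≤
      (N.factorial : ℚ) ^ 8 * ∑ y ∈ Finset.Icc 1 (N / 2), (1 / 4 : ℚ) ^ y := by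
    have h1 := Finset.card_le_card hcover
    simp only [Finset.card_univ, Fintype.card_pi, Fintype.card_perm, Finset.prod_const,
      Fintype.card_fin] at h1
    have h2 : ((N.factorial : ℚ)) ^ 8 ≤ ∑ y ∈ Finset.Icc 1 (N / 2),
        ∑ Y ∈ (Finset.univ : Finset X).powersetCard y,
        ∑ W ∈ (Finset.univ : Finset X).powersetCard (y / 10),
          ((Fintype.piFinset (fun _ : Fin 8 => bad Y W)).card : ℚ) := by
      have h3 := h1.trans (Finset.card_biUnion_le.trans (Finset.sum_le_sum fun y _ =>
        Finset.card_biUnion_le.trans (Finset.sum_le_sum fun Y _ => Finset.card_biUnion_le)))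
      exact_mod_cast h3
    refine h2.trans ?_
    rw [Finset.mul_sum]
    apply Finset.sum_le_sum
    intro y hy
    have hy' := Finset.mem_Icc.1 hy
    refine (Finset.sum_le_sum fun Y hY => Finset.sum_le_sum fun W hW => hbad y hy Y hY W hW).trans ?_
    simp only [Finset.sum_const, Finset.card_powersetCard, Finset.card_univ, nsmul_eq_mul, ← hN]
    have hcpos : 0 < (N.choose y : ℚ) := by exact_mod_cast Nat.choose_pos (by omega)
    have hw : (N.choose (y / 10) : ℚ) ≤ N.choose y := by
      exact_mod_cast choose_le_choose_left (by omega) (by omega)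
    have h2c : (2 : ℚ) ^ y ≤ N.choose y := by
      exact_mod_cast two_pow_le_choose (by omega : 2 * y ≤ N)
    calc (N.choose y : ℚ) * (N.choose (y / 10) *
          ((N.factorial : ℚ) ^ 8 * (2 ^ (4 * y) / (N.choose y : ℚ) ^ 8)))
        ≤ (N.choose y : ℚ) * (N.choose y *
          ((N.factorial : ℚ) ^ 8 * (2 ^ (4 * y) / (N.choose y : ℚ) ^ 8))) := by
          gcongr
      _ = (N.factorial : ℚ) ^ 8 * (2 ^ (4 * y) / (N.choose y : ℚ) ^ 6) := by
          field_simp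
      _ ≤ (N.factorial : ℚ) ^ 8 * (2 ^ (4 * y) / (2 ^ y : ℚ) ^ 6) := by gcongr
      _ = (N.factorial : ℚ) ^ 8 * (1 / 4) ^ y := by
          congr 1
          rw [div_pow, one_pow, show (4 : ℚ) = 2 ^ 2 by norm_num, ← pow_mul, ← pow_mul,
            div_eq_div_iff (by positivity) (by positivity), one_mul, ← pow_add]
          congr 1
          ring
  have hpos : (0 : ℚ) < (N.factorial : ℚ) ^ 8 := by
    have := N.factorial_pos
    positivity
  have := mul_lt_mul_of_pos_left (sum_quarter_pow_lt (N / 2)) hpos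
  linarith

/-- A symmetric relation (given by its neighbourhoods) of degree at most `17` in which every set of
at most half of the points has at least `11/10` times as many neighbours. -/
theorem exists_expander (X : Type*) [Fintype X] [DecidableEq X] :
    ∃ Γ : X → Finset X, (∀ x, x ∈ Γ x) ∧ (∀ x y, y ∈ Γ x → x ∈ Γ y) ∧ (∀ x, (Γ x).card ≤ 17) ∧
      ∀ Y : Finset X, 2 * Y.card ≤ Fintype.card X → 11 * Y.card ≤ 10 * (Y.biUnion Γ).card := by
  obtain ⟨π, hπ⟩ := exists_expanding_perms X
  let Γ : X → Finset X := fun x =>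
    insert x (Finset.univ.image (fun j => π j x) ∪ Finset.univ.image (fun j => (π j).symm x))
  refine ⟨Γ, fun x => Finset.mem_insert_self _ _, ?_, ?_, ?_⟩
  · intro x y h
    simp only [Γ, Finset.mem_insert, Finset.mem_union, Finset.mem_image, Finset.mem_univ,
      true_and] at h ⊢
    rcases h with rfl | ⟨j, rfl⟩ | ⟨j, rfl⟩
    · exact Or.inl rfl
    · exact Or.inr (Or.inr ⟨j, by simp⟩)
    · exact Or.inr (Or.inl ⟨j, by simp⟩)
  · intro x
    have h1 : (Finset.univ.image (fun j => π j x)).card ≤ 8 := by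
      simpa using Finset.card_image_le (s := Finset.univ) (f := fun j => π j x)
    have h2 : (Finset.univ.image (fun j => (π j).symm x)).card ≤ 8 := by
      simpa using Finset.card_image_le (s := Finset.univ) (f := fun j => (π j).symm x)
    have h3 := Finset.card_union_le (Finset.univ.image (fun j => π j x))
      (Finset.univ.image (fun j => (π j).symm x))
    have h4 := Finset.card_insert_le x (Finset.univ.image (fun j => π j x) ∪
      Finset.univ.image (fun j => (π j).symm x))
    simp only [Γ]
    omega
  · intro Y hY
    refine (hπ Y hY).trans (Nat.mul_le_mul_left _ (Finset.card_le_card ?_))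
    intro y hy
    simp only [Γ, Finset.mem_insert, Finset.mem_union, Finset.mem_image, Finset.mem_univ,
      true_and, Finset.mem_biUnion] at hy ⊢
    rcases hy with h | ⟨j, x, hx, rfl⟩
    · exact ⟨y, h, Or.inl rfl⟩
    · exact ⟨x, hx, Or.inr (Or.inl ⟨j, rfl⟩)⟩

/-! ### Relocating vertices to neighbouring buckets -/

theorem card_filter_mem_eq_sum {V X : Type*} [Fintype V] [DecidableEq X] (f : V → X)
    (S : Finset X) :
    (Finset.univ.filter (fun v => f v ∈ S)).card
      = ∑ x ∈ S, (Finset.univ.filter (fun v => f v = x)).card := by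
  rw [Finset.card_eq_sum_card_fiberwise (f := f) (t := S)]
  · apply Finset.sum_congr rfl
    intro x hx
    congr 1
    ext v
    simp only [Finset.mem_filter, Finset.mem_univ, true_and]
    exact ⟨fun h => h.2, fun h => ⟨h ▸ hx, h⟩⟩
  · intro v hv
    simpa using hv

/-- If `f` and `β` distribute two sets of equal size almost evenly over the points of an expander,
then `f` agrees with `β` up to one step in the expander, after a bijective change of variable. -/
theorem exists_relocation {V W X : Type*} [Fintype V] [Fintype W] [Fintype X] [DecidableEq V]
    [DecidableEq W] [DecidableEq X] (hVW : Fintype.card V = Fintype.card W)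
    (Γ : X → Finset X) (hrefl : ∀ x, x ∈ Γ x) (hsymm : ∀ x y, y ∈ Γ x → x ∈ Γ y)
    (hexp : ∀ Y : Finset X, 2 * Y.card ≤ Fintype.card X → 11 * Y.card ≤ 10 * (Y.biUnion Γ).card)
    (f : V → X) (β : W → X) (μ : ℝ) (hμ : 0 ≤ μ)
    (hf : ∀ x, 39 * μ ≤ 40 * ((Finset.univ.filter (fun v => f v = x)).card : ℝ) ∧
      40 * ((Finset.univ.filter (fun v => f v = x)).card : ℝ) ≤ 41 * μ)
    (hβ : ∀ x, 39 * μ ≤ 40 * ((Finset.univ.filter (fun w => β w = x)).card : ℝ) ∧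
      40 * ((Finset.univ.filter (fun w => β w = x)).card : ℝ) ≤ 41 * μ) :
    ∃ φ : V → W, Function.Injective φ ∧ ∀ v, β (φ v) ∈ Γ (f v) := by
  classical
  let t : V → Finset W := fun v => Finset.univ.filter (fun w => β w ∈ Γ (f v))
  suffices h : ∃ φ : V → W, Function.Injective φ ∧ ∀ v, φ v ∈ t v by
    obtain ⟨φ, h1, h2⟩ := h
    exact ⟨φ, h1, fun v => by simpa [t] using h2 v⟩
  -- Hall's condition: expansion by `11 / 10` beats the ratio `41 / 39` of the extreme loads.
  rw [← Finset.all_card_le_biUnion_card_iff_exists_injective]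
  intro S
  set Y := S.image f with hY
  set U := Y.biUnion Γ with hU
  have hfub : ∀ A : Finset X,
      40 * ((Finset.univ.filter (fun v => f v ∈ A)).card : ℝ) ≤ A.card * (41 * μ) := by
    intro A
    rw [card_filter_mem_eq_sum]
    push_cast
    rw [Finset.mul_sum, ← nsmul_eq_mul]
    exact Finset.sum_le_card_nsmul _ _ _ (fun x _ => (hf x).2)
  have hflb : ∀ A : Finset X,
      A.card * (39 * μ) ≤ 40 * ((Finset.univ.filter (fun v => f v ∈ A)).card : ℝ) := by
    intro A
    rw [card_filter_mem_eq_sum]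
    push_cast
    rw [Finset.mul_sum, ← nsmul_eq_mul]
    exact Finset.card_nsmul_le_sum _ _ _ (fun x _ => (hf x).1)
  have hβub : ∀ A : Finset X,
      40 * ((Finset.univ.filter (fun v => β v ∈ A)).card : ℝ) ≤ A.card * (41 * μ) := by
    intro A
    rw [card_filter_mem_eq_sum]
    push_cast
    rw [Finset.mul_sum, ← nsmul_eq_mul]
    exact Finset.sum_le_card_nsmul _ _ _ (fun x _ => (hβ x).2)
  have hβlb : ∀ A : Finset X,
      A.card * (39 * μ) ≤ 40 * ((Finset.univ.filter (fun v => β v ∈ A)).card : ℝ) := by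
    intro A
    rw [card_filter_mem_eq_sum]
    push_cast
    rw [Finset.mul_sum, ← nsmul_eq_mul]
    exact Finset.card_nsmul_le_sum _ _ _ (fun x _ => (hβ x).1)
  have hbi : S.biUnion t = Finset.univ.filter (fun w => β w ∈ U) := by
    ext w
    simp [t, hU, hY]
  have hS : S.card ≤ (Finset.univ.filter (fun v => f v ∈ Y)).card := by
    apply Finset.card_le_card
    intro v hv
    simp only [Finset.mem_filter, Finset.mem_univ, true_and]
    exact Finset.mem_image_of_mem _ hv
  rw [hbi]
  refine hS.trans ?_
  have hscale : ∀ a b : ℕ, 11 * a ≤ 10 * b → (a : ℝ) * (41 * μ) ≤ b * (39 * μ) := by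
    intro a b h
    have h' : (11 : ℝ) * a ≤ 10 * b := by exact_mod_cast h
    have ha : (0 : ℝ) ≤ a := Nat.cast_nonneg a
    have : (a : ℝ) * 41 ≤ b * 39 := by linarith
    nlinarith
  by_cases hc : 2 * Y.card ≤ Fintype.card X
  · have h1 := hscale _ _ (hexp Y hc)
    have h2 := hfub Y
    have h3 := hβlb U
    have : ((Finset.univ.filter (fun v => f v ∈ Y)).card : ℝ)
        ≤ (Finset.univ.filter (fun w => β w ∈ U)).card := by linarith
    exact_mod_cast this
  -- A large set is handled through the complement of its neighbourhood.
  · have hYU : Y ⊆ U := fun y hy => Finset.mem_biUnion.2 ⟨y, hy, hrefl y⟩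
    have hYUc := Finset.card_le_card hYU
    have hZ : 2 * (Uᶜ).card ≤ Fintype.card X := by
      rw [Finset.card_compl]
      omega
    have hsub : (Uᶜ).biUnion Γ ⊆ Yᶜ := by
      intro y hy
      obtain ⟨z, hz, hzy⟩ := Finset.mem_biUnion.1 hy
      rw [Finset.mem_compl] at hz ⊢
      exact fun hyY => hz (Finset.mem_biUnion.2 ⟨y, hyY, hsymm _ _ hzy⟩)
    have h1 := hscale _ _ ((hexp _ hZ).trans (Nat.mul_le_mul_left _ (Finset.card_le_card hsub)))
    have h2 := hβub Uᶜ
    have h3 := hflb Yᶜ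
    have h4 : ((Finset.univ.filter (fun w => β w ∈ Uᶜ)).card : ℝ)
        ≤ (Finset.univ.filter (fun v => f v ∈ Yᶜ)).card := by linarith
    have h4' : (Finset.univ.filter (fun w => β w ∈ Uᶜ)).card
        ≤ (Finset.univ.filter (fun v => f v ∈ Yᶜ)).card := by exact_mod_cast h4
    have h5 := Finset.card_filter_add_card_filter_not (s := Finset.univ) (fun v => f v ∈ Y)
    have h6 := Finset.card_filter_add_card_filter_not (s := Finset.univ) (fun w => β w ∈ U)
    simp only [Finset.mem_compl, Finset.card_univ] at h4' h5 h6
    omega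

/-! ### Evenly distributed windows of a random bit string -/

theorem greedy_coloring {V : Type*} [Fintype V] [DecidableEq V] (R : V → V → Prop)
    [DecidableRel R] (hR : ∀ u v, R u v → R v u) (D : ℕ)
    (hD : ∀ v, (Finset.univ.filter (fun u => R v u)).card ≤ D) :
    ∃ col : V → Fin (D + 1), ∀ u v, u ≠ v → R u v → col u ≠ col v := by
  have : ∀ S : Finset V, ∃ col : V → Fin (D + 1),
      ∀ u ∈ S, ∀ v ∈ S, u ≠ v → R u v → col u ≠ col v := by
    intro S
    induction S using Finset.induction_on with
    | empty => exact ⟨fun _ => 0, by simp⟩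
    | insert a S ha ih =>
      obtain ⟨col, hcol⟩ := ih
      obtain ⟨c, hc⟩ : ∃ c : Fin (D + 1),
          c ∉ (Finset.univ.filter (fun u => R a u)).image col := by
        by_contra hcon
        push Not at hcon
        have h1 : (Finset.univ : Finset (Fin (D + 1)))
            ⊆ (Finset.univ.filter (fun u => R a u)).image col := fun c _ => hcon c
        have h2 := (Finset.card_le_card h1).trans (Finset.card_image_le.trans (hD a))
        simp at h2
      have hc' : ∀ u, R a u → col u ≠ c := by
        intro u hu h
        exact hc (Finset.mem_image.2 ⟨u, by simpa using hu, h⟩)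
      refine ⟨Function.update col a c, ?_⟩
      intro u hu v hv huv hr
      rw [Finset.mem_insert] at hu hv
      rcases hu with rfl | hu
      · rcases hv with rfl | hv
        · exact absurd rfl huv
        · rw [Function.update_self, Function.update_of_ne (Ne.symm huv)]
          exact (hc' v hr).symm
      · rcases hv with rfl | hv
        · rw [Function.update_self, Function.update_of_ne huv]
          exact hc' u (hR _ _ hr)
        · rw [Function.update_of_ne (by rintro rfl; exact ha hu),
            Function.update_of_ne (by rintro rfl; exact ha hv)]
          exact hcol u hu v hv huv hr
  obtain ⟨col, h⟩ := this Finset.univ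
  exact ⟨col, fun u v => h u (Finset.mem_univ _) v (Finset.mem_univ _)⟩

/-- Restricting a uniformly random bit string to an injectively indexed set of places gives a
uniformly random bit string. -/
theorem sum_bits_comp {A I : Type*} [Fintype A] [Fintype I] [DecidableEq A] [DecidableEq I]
    (J : A → I) (hJ : Function.Injective J) (F : (A → Bool) → ℝ) :
    (∑ b : I → Bool, F (b ∘ J)) * 2 ^ Fintype.card A
      = 2 ^ Fintype.card I * ∑ g : A → Bool, F g := by
  classical
  have hfib : ∀ g g' : A → Bool, (Finset.univ.filter (fun b : I → Bool => b ∘ J = g)).card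
      ≤ (Finset.univ.filter (fun b : I → Bool => b ∘ J = g')).card := by
    intro g g'
    apply Finset.card_le_card_of_injOn
      (fun b i => xor (b i) (Function.extend J (fun a => xor (g a) (g' a)) (fun _ => false) i))
    · intro b hb
      simp only [Finset.coe_filter, Finset.mem_univ, true_and, Set.mem_ofPred_eq] at hb ⊢
      funext a
      have := congrFun hb a
      simp only [Function.comp_apply] at this ⊢
      rw [hJ.extend_apply, this]
      cases g a <;> cases g' a <;> rfl
    · intro b _ b' _ h
      funext i
      have := congrFun h i
      simpa using this
  have hconst : ∀ g, (Finset.univ.filter (fun b : I → Bool => b ∘ J = g)).card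
      = (Finset.univ.filter (fun b : I → Bool => b ∘ J = fun _ => false)).card := fun g =>
    le_antisymm (hfib _ _) (hfib _ _)
  set c := (Finset.univ.filter (fun b : I → Bool => b ∘ J = fun _ => false)).card with hc
  have hsum : ∀ G : (A → Bool) → ℝ, ∑ b : I → Bool, G (b ∘ J) = c * ∑ g, G g := by
    intro G
    rw [← Finset.sum_fiberwise (s := Finset.univ) (g := fun b : I → Bool => b ∘ J)]
    rw [Finset.mul_sum]
    apply Finset.sum_congr rfl
    intro g _
    rw [← hconst g, ← nsmul_eq_mul, ← Finset.sum_const]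
    apply Finset.sum_congr rfl
    intro b hb
    rw [(Finset.mem_filter.1 hb).2]
  have h1 := hsum (fun _ => 1)
  simp at h1
  rw [hsum, h1]
  ring

/-- Moment generating function of the number of windows equal to `x`, over a class of vertices with
disjoint windows. -/
theorem sum_exp_count {V I P : Type*} [Fintype V] [Fintype I] [Fintype P] [DecidableEq V]
    [DecidableEq I] [DecidableEq P] (J : V → P → I) (C : Finset V)
    (hJ : ∀ u ∈ C, ∀ v ∈ C, ∀ p q, J u p = J v q → u = v ∧ p = q) (x : P → Bool) (l : ℝ) :
    ∑ b : I → Bool, Real.exp (l * (C.filter (fun v => b ∘ J v = x)).card)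
      = 2 ^ Fintype.card I * (1 + (Real.exp l - 1) / 2 ^ Fintype.card P) ^ C.card := by
  classical
  have h := sum_bits_comp (fun a : C × P => J a.1.1 a.2)
    (by
      rintro ⟨u, p⟩ ⟨v, q⟩ h
      obtain ⟨h1, h2⟩ := hJ u.1 u.2 v.1 v.2 p q h
      exact Prod.ext (Subtype.ext h1) h2)
    (fun g => ∏ u : C, if (fun p => g (u, p)) = x then Real.exp l else 1)
  have e1 : ∀ b : I → Bool, Real.exp (l * (C.filter (fun v => b ∘ J v = x)).card)
      = ∏ u : C, if (fun p => (b ∘ fun a : C × P => J a.1.1 a.2) (u, p)) = x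
        then Real.exp l else 1 := by
    intro b
    have h0 : (∏ u : C, if (fun p => (b ∘ fun a : C × P => J a.1.1 a.2) (u, p)) = x
        then Real.exp l else 1) = ∏ u ∈ C, if b ∘ J u = x then Real.exp l else 1 :=
      Finset.prod_coe_sort C (fun u => if b ∘ J u = x then Real.exp l else 1)
    rw [h0, Finset.prod_ite, mul_comm l, Real.exp_nat_mul]
    simp
  have e2 : ∑ g : C × P → Bool, ∏ u : C, (if (fun p => g (u, p)) = x then Real.exp l else 1)
      = (2 ^ Fintype.card P + (Real.exp l - 1)) ^ C.card := by
    rw [← (Equiv.curry C P Bool).symm.sum_comp]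
    simp only [Equiv.curry_symm_apply, Function.uncurry]
    have := Finset.prod_univ_sum (fun _ : C => (Finset.univ : Finset (P → Bool)))
      (fun _ y => if y = x then Real.exp l else 1)
    rw [Fintype.piFinset_univ] at this
    rw [← this]
    have h3 : ∑ y : P → Bool, (if y = x then Real.exp l else 1)
        = 2 ^ Fintype.card P + (Real.exp l - 1) := by
      have : ∀ y : P → Bool, (if y = x then Real.exp l else 1)
          = 1 + if y = x then Real.exp l - 1 else 0 := by
        intro y; split_ifs <;> ring
      simp only [this, Finset.sum_add_distrib]
      simp
    rw [h3]
    simp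
  rw [e2] at h
  simp only [e1]
  have hpos : (0 : ℝ) < 2 ^ Fintype.card P := by positivity
  have hcard : Fintype.card (C × P) = Fintype.card P * C.card := by
    rw [Fintype.card_prod, Fintype.card_coe, mul_comm]
  rw [hcard, pow_mul] at h
  have e3 : (1 + (Real.exp l - 1) / 2 ^ Fintype.card P : ℝ)
      = (2 ^ Fintype.card P + (Real.exp l - 1)) / 2 ^ Fintype.card P := by field_simp
  rw [e3, div_pow, ← mul_div_assoc, eq_div_iff (by positivity)]
  exact h

/-- Chernoff bound in counting form, for both tails (`l` may be negative). -/
theorem card_tail_le {V I P : Type*} [Fintype V] [Fintype I] [Fintype P] [DecidableEq V]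
    [DecidableEq I] [DecidableEq P] (J : V → P → I) (C : Finset V)
    (hJ : ∀ u ∈ C, ∀ v ∈ C, ∀ p q, J u p = J v q → u = v ∧ p = q) (x : P → Bool)
    (l : ℝ) (hl : |l| ≤ 1) (η : ℝ) :
    ((Finset.univ.filter (fun b : I → Bool =>
      l * (C.card / 2 ^ Fintype.card P) + η ≤ l * (C.filter (fun v => b ∘ J v = x)).card)).card : ℝ)
      ≤ 2 ^ Fintype.card I * Real.exp (l ^ 2 * (C.card / 2 ^ Fintype.card P) - η) := by
  set μ : ℝ := C.card / 2 ^ Fintype.card P with hμ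
  have hμ0 : 0 ≤ μ := by positivity
  have h1 : ((Finset.univ.filter (fun b : I → Bool =>
      l * μ + η ≤ l * (C.filter (fun v => b ∘ J v = x)).card)).card : ℝ) * Real.exp (l * μ + η)
      ≤ ∑ b : I → Bool, Real.exp (l * (C.filter (fun v => b ∘ J v = x)).card) := by
    rw [← nsmul_eq_mul]
    refine (Finset.card_nsmul_le_sum _
      (fun b : I → Bool => Real.exp (l * (C.filter (fun v => b ∘ J v = x)).card)) _ ?_).trans
      (Finset.sum_le_sum_of_subset_of_nonneg (Finset.filter_subset _ _) ?_)
    · intro b hb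
      exact Real.exp_le_exp.2 (Finset.mem_filter.1 hb).2
    · intro b _ _
      positivity
  rw [sum_exp_count J C hJ x l] at h1
  have h2 : (1 + (Real.exp l - 1) / 2 ^ Fintype.card P) ^ C.card ≤ Real.exp ((l + l ^ 2) * μ) := by
    have hpos : (0 : ℝ) < 2 ^ Fintype.card P := by positivity
    have hpos1 : (1 : ℝ) ≤ 2 ^ Fintype.card P := one_le_pow₀ (by norm_num)
    have h3 : 1 + (Real.exp l - 1) / 2 ^ Fintype.card P
        ≤ Real.exp ((l + l ^ 2) / 2 ^ Fintype.card P) := by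
      have h4 := (abs_le.1 (Real.abs_exp_sub_one_sub_id_le hl)).2
      have h5 : (Real.exp l - 1) / 2 ^ Fintype.card P ≤ (l + l ^ 2) / 2 ^ Fintype.card P := by
        gcongr
        linarith
      have := Real.add_one_le_exp ((l + l ^ 2) / 2 ^ Fintype.card P)
      linarith
    have h0 : 0 ≤ 1 + (Real.exp l - 1) / 2 ^ Fintype.card P := by
      have e3 : (1 + (Real.exp l - 1) / 2 ^ Fintype.card P : ℝ)
        = (2 ^ Fintype.card P + (Real.exp l - 1)) / 2 ^ Fintype.card P := by field_simp
      rw [e3]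
      have := Real.exp_pos l
      apply div_nonneg _ hpos.le
      linarith
    calc _ ≤ (Real.exp ((l + l ^ 2) / 2 ^ Fintype.card P)) ^ C.card := by gcongr
      _ = _ := by
        rw [← Real.exp_nat_mul, hμ]
        congr 1
        ring
  have h6 := h1.trans (mul_le_mul_of_nonneg_left h2 (by positivity : (0 : ℝ) ≤ 2 ^ Fintype.card I))
  have h7 : Real.exp ((l + l ^ 2) * μ) = Real.exp (l ^ 2 * μ - η) * Real.exp (l * μ + η) := by
    rw [← Real.exp_add]
    congr 1
    ring
  rw [h7, ← mul_assoc] at h6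
  exact le_of_mul_le_mul_right h6 (Real.exp_pos _)

/-- Some bit string has all its windows distributed almost evenly. -/
theorem exists_even_bits {V I P : Type*} [Fintype V] [Fintype I] [Fintype P] [DecidableEq V]
    [DecidableEq I] [DecidableEq P] (J : V → P → I) (Q : ℕ) (hQ : 0 < Q) (col : V → Fin Q)
    (hJ : ∀ u v, col u = col v → ∀ p q, J u p = J v q → u = v ∧ p = q)
    (N : ℝ) (hN : N = 2 ^ Fintype.card P)
    (hsmall : 2 * N * Q * Real.exp (-(Fintype.card V / (12800 * N * Q))) < 1) :
    ∃ b : I → Bool, ∀ x : P → Bool,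
      39 * (Fintype.card V / N) ≤ 40 * ((Finset.univ.filter (fun v => b ∘ J v = x)).card : ℝ) ∧
      40 * ((Finset.univ.filter (fun v => b ∘ J v = x)).card : ℝ) ≤ 41 * (Fintype.card V / N) := by
  classical
  have hNpos : 0 < N := by rw [hN]; positivity
  have hQpos : (0 : ℝ) < Q := by exact_mod_cast hQ
  let C : Fin Q → Finset V := fun c => Finset.univ.filter (fun v => col v = c)
  have hC : ∀ c, ∀ u ∈ C c, ∀ v ∈ C c, ∀ p q, J u p = J v q → u = v ∧ p = q := by
    intro c u hu v hv
    simp only [C, Finset.mem_filter, Finset.mem_univ, true_and] at hu hv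
    exact hJ u v (hu.trans hv.symm)
  set M : ℝ := Fintype.card V / (N * Q) with hM
  let Z : (I → Bool) → (P → Bool) → Fin Q → ℝ := fun b x c =>
    ((C c).filter (fun v => b ∘ J v = x)).card
  let μ : Fin Q → ℝ := fun c => (C c).card / N
  have hμ0 : ∀ c, 0 ≤ μ c := fun c => by simp only [μ]; positivity
  -- `sg` selects the upper or the lower tail. Adding the average `M` to `μ c` makes the bound
  -- effective for small colour classes too, at the cost of doubling the total error.
  let bad : Bool → (P → Bool) → Fin Q → Finset (I → Bool) := fun sg x c =>
    Finset.univ.filter (fun b =>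
      (if sg then (1 / 160 : ℝ) else -(1 / 160)) * μ c + 1 / 12800 * (μ c + M)
        ≤ (if sg then (1 / 160 : ℝ) else -(1 / 160)) * Z b x c)
  have hbad : ∀ sg x c, ((bad sg x c).card : ℝ)
      ≤ 2 ^ Fintype.card I * Real.exp (-(Fintype.card V / (12800 * N * Q))) := by
    intro sg x c
    have h := card_tail_le J (C c) (hC c) x (if sg then (1 / 160 : ℝ) else -(1 / 160))
      (by cases sg <;> norm_num [abs_le]) (1 / 12800 * (μ c + M))
    rw [← hN] at h
    refine h.trans ?_
    gcongr
    have e1 : (Fintype.card V / (12800 * N * Q) : ℝ) = M / 12800 := by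
      rw [hM]; field_simp
    have e2 : (if sg = true then (1 / 160 : ℝ) else -(1 / 160)) ^ 2 = 1 / 25600 := by
      cases sg <;> norm_num
    rw [e1, e2]
    have := hμ0 c
    change 1 / 25600 * μ c - _ ≤ _
    linarith
  have hex : ∃ b, ∀ sg x c, b ∉ bad sg x c := by
    by_contra hcon
    push Not at hcon
    have hcov : (Finset.univ : Finset (I → Bool)) ⊆
        Finset.univ.biUnion (fun y : Bool × (P → Bool) × Fin Q => bad y.1 y.2.1 y.2.2) := by
      intro b _
      obtain ⟨sg, x, c, h⟩ := hcon b
      exact Finset.mem_biUnion.2 ⟨(sg, x, c), Finset.mem_univ _, h⟩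
    have h1 := (Finset.card_le_card hcov).trans Finset.card_biUnion_le
    have h2 : ((2 : ℝ) ^ Fintype.card I) ≤ ∑ y : Bool × (P → Bool) × Fin Q,
        ((bad y.1 y.2.1 y.2.2).card : ℝ) := by
      have : (Finset.univ : Finset (I → Bool)).card = 2 ^ Fintype.card I := by simp
      rw [this] at h1
      exact_mod_cast h1
    have h3 := h2.trans (Finset.sum_le_sum fun y _ => hbad y.1 y.2.1 y.2.2)
    simp only [Finset.sum_const, Finset.card_univ, Fintype.card_prod, Fintype.card_bool,
      Fintype.card_fun, Fintype.card_fin, nsmul_eq_mul] at h3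
    push_cast at h3
    rw [← hN] at h3
    have hpos : (0 : ℝ) < 2 ^ Fintype.card I := by positivity
    have h4 := mul_lt_mul_of_pos_left hsmall hpos
    linarith
  obtain ⟨b, hb⟩ := hex
  refine ⟨b, fun x => ?_⟩
  have hb1 : ∀ c, Z b x c ≤ μ c + 1 / 80 * (μ c + M) := by
    intro c
    have := hb true x c
    simp only [bad, Finset.mem_filter, Finset.mem_univ, true_and, not_le, if_true] at this
    linarith
  have hb2 : ∀ c, μ c - 1 / 80 * (μ c + M) ≤ Z b x c := by
    intro c
    have := hb false x c
    simp only [bad, Finset.mem_filter, Finset.mem_univ, true_and, not_le] at this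
    norm_num at this
    linarith
  have hZ : ((Finset.univ.filter (fun v => b ∘ J v = x)).card : ℝ) = ∑ c, Z b x c := by
    simp only [Z]
    norm_cast
    rw [Finset.card_eq_sum_card_fiberwise (f := col) (t := Finset.univ)
      (fun x _ => Finset.mem_coe.2 (Finset.mem_univ _))]
    apply Finset.sum_congr rfl
    intro c _
    simp only [C, Finset.filter_filter]
    congr 1
    ext v
    simp [and_comm]
  have hμsum : ∑ c, μ c = Fintype.card V / N := by
    simp only [μ]
    rw [← Finset.sum_div]
    congr 1
    norm_cast
    rw [← Finset.card_univ, Finset.card_eq_sum_card_fiberwise (f := col) (t := Finset.univ)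
      (fun x _ => Finset.mem_coe.2 (Finset.mem_univ _))]
  have hMsum : ∑ _c : Fin Q, M = Fintype.card V / N := by
    rw [Finset.sum_const, Finset.card_univ, Fintype.card_fin, nsmul_eq_mul, hM]
    field_simp
  have hs1 := Finset.sum_le_sum fun c (_ : c ∈ Finset.univ) => hb1 c
  have hs2 := Finset.sum_le_sum fun c (_ : c ∈ Finset.univ) => hb2 c
  rw [Finset.sum_add_distrib, ← Finset.mul_sum, Finset.sum_add_distrib, hμsum, hMsum] at hs1
  rw [Finset.sum_sub_distrib, ← Finset.mul_sum, Finset.sum_add_distrib, hμsum, hMsum] at hs2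
  rw [hZ]
  constructor <;> linarith

/-- Two bit strings are equal or shifts of each other by one place. -/
def WClose {t : ℕ} (y z : Fin t → Bool) : Prop :=
  y = z ∨ (∀ j k : Fin t, k.1 = j.1 + 1 → y k = z j) ∨ (∀ j k : Fin t, k.1 = j.1 + 1 → z k = y j)

/-- The five strings at most one shift away from `z`, listed with possible repetitions. -/
def wnb {t : ℕ} (z : Fin t → Bool) : Option (Bool × Bool) → (Fin t → Bool)
  | none => z
  | some (false, c) => fun k => if h : k.1 + 1 < t then z ⟨k.1 + 1, h⟩ else c
  | some (true, c) => fun k => if h : 0 < k.1 then z ⟨k.1 - 1, by omega⟩ else c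

theorem WClose.exists_eq_wnb {t : ℕ} {y z : Fin t → Bool} (h : WClose y z) :
    ∃ c, y = wnb z c := by
  rcases h with rfl | h | h
  · exact ⟨none, rfl⟩
  · rcases Nat.eq_zero_or_pos t with rfl | ht
    · exact ⟨none, funext fun k => k.elim0⟩
    · refine ⟨some (true, y ⟨0, ht⟩), ?_⟩
      funext k
      simp only [wnb]
      split_ifs with hk
      · exact h ⟨k.1 - 1, by omega⟩ k (by simp only; omega)
      · congr 1
        apply Fin.ext
        simp only
        omega
  · rcases Nat.eq_zero_or_pos t with rfl | ht
    · exact ⟨none, funext fun k => k.elim0⟩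
    · refine ⟨some (false, y ⟨t - 1, by omega⟩), ?_⟩
      funext k
      simp only [wnb]
      split_ifs with hk
      · exact (h k ⟨k.1 + 1, hk⟩ rfl).symm
      · congr 1
        apply Fin.ext
        simp only
        omega

/-- Reading a suitable bit string along the lines of a layout gives an evenly distributed map in
which close vertices receive shifted strings. -/
theorem exists_windows {V : Type*} [Fintype V] [DecidableEq V] (s B t : ℕ)
    (σ : Fin s → V → V × ℕ)
    (hσ : ∀ i p, (Finset.univ.filter (fun v => σ i v = p)).card ≤ B) (N : ℝ)
    (hN : N = 2 ^ (s * t))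
    (hsmall : 2 * N * (s * (2 * t * B) + 1 : ℕ) *
      Real.exp (-(Fintype.card V / (12800 * N * (s * (2 * t * B) + 1 : ℕ)))) < 1) :
    ∃ f : V → (Fin s × Fin t → Bool),
      (∀ x, 39 * (Fintype.card V / N) ≤ 40 * ((Finset.univ.filter (fun v => f v = x)).card : ℝ) ∧
        40 * ((Finset.univ.filter (fun v => f v = x)).card : ℝ) ≤ 41 * (Fintype.card V / N)) ∧
      ∀ i u v, PosClose 1 (σ i u) (σ i v) →
        WClose (fun a => f u (i, a)) (fun a => f v (i, a)) := by
  classical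
  obtain ⟨K, hK⟩ : ∃ K, ∀ i v, (σ i v).2 + t ≤ K := by
    refine ⟨(∑ i, ∑ v, (σ i v).2) + t, fun i v => ?_⟩
    have h1 := Finset.single_le_sum (f := fun v => (σ i v).2) (fun _ _ => Nat.zero_le _)
      (Finset.mem_univ v)
    have h2 := Finset.single_le_sum (f := fun i => ∑ v, (σ i v).2) (fun _ _ => Nat.zero_le _)
      (Finset.mem_univ i)
    omega
  -- In coordinate `i`, the window of `v` consists of the `t` bits of its line that start at its
  -- place.
  let J : V → Fin s × Fin t → Fin s × V × Fin K := fun v p =>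
    (p.1, (σ p.1 v).1, ⟨(σ p.1 v).2 + p.2.1, by have := hK p.1 v; have := p.2.2; omega⟩)
  have hJinj : ∀ v, Function.Injective (J v) := by
    rintro v ⟨i, a⟩ ⟨i', a'⟩ h
    simp only [J, Prod.mk.injEq, Fin.mk.injEq] at h
    obtain ⟨rfl, -, h⟩ := h
    have : a = a' := Fin.ext (by omega)
    rw [this]
  let R : V → V → Prop := fun u v => ∃ p q, J u p = J v q
  obtain ⟨col, hcol⟩ := greedy_coloring R (fun u v ⟨p, q, h⟩ => ⟨q, p, h.symm⟩) (s * (2 * t * B))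
    (by
      intro v
      -- Vertices whose windows meet lie on a common line, less than `t` places apart.
      have hsub : Finset.univ.filter (fun u => R v u) ⊆
          (Finset.univ : Finset (Fin s × Fin (2 * t))).biUnion (fun y =>
            Finset.univ.filter (fun u => σ y.1 u = ((σ y.1 v).1, (σ y.1 v).2 + y.2.1 - t))) := by
        intro u hu
        obtain ⟨p, q, h⟩ := (Finset.mem_filter.1 hu).2
        obtain ⟨i, a⟩ := p
        obtain ⟨i', a'⟩ := q
        simp only [J, Prod.mk.injEq, Fin.mk.injEq] at h
        obtain ⟨rfl, h1, h2⟩ := h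
        have ha := a.2
        have ha' := a'.2
        rw [Finset.mem_biUnion]
        refine ⟨(i, ⟨(σ i u).2 + t - (σ i v).2, by omega⟩), Finset.mem_univ _, ?_⟩
        rw [Finset.mem_filter]
        refine ⟨Finset.mem_univ _, Prod.ext h1.symm ?_⟩
        simp only
        omega
      refine (Finset.card_le_card hsub).trans
        ((Finset.card_biUnion_le_card_mul _ _ B (fun y _ => hσ _ _)).trans ?_)
      simp [mul_assoc])
  obtain ⟨b, hb⟩ := exists_even_bits J (s * (2 * t * B) + 1) (by omega) col
    (by
      intro u v huv p q h
      have : u = v := by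
        by_contra hne
        exact hcol u v hne ⟨p, q, h⟩ huv
      subst this
      exact ⟨rfl, hJinj u h⟩) N (by simp [hN]) hsmall
  refine ⟨fun v => b ∘ J v, hb, ?_⟩
  intro i u v huv
  obtain ⟨h1, h2, h3⟩ := huv
  have hread : ∀ (u v : V) (a c : Fin t), (σ i u).1 = (σ i v).1 →
      (σ i u).2 + a.1 = (σ i v).2 + c.1 → b (J u (i, a)) = b (J v (i, c)) := by
    intro u v a c h h'
    simp only [J, h, h']
  rcases (by omega : (σ i u).2 = (σ i v).2 ∨ (σ i v).2 = (σ i u).2 + 1 ∨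
    (σ i u).2 = (σ i v).2 + 1) with h | h | h
  · exact Or.inl (funext fun a => hread u v a a h1 (by omega))
  · exact Or.inr (Or.inl fun j k hk => hread u v k j h1 (by omega))
  · exact Or.inr (Or.inr fun j k hk => hread v u k j h1.symm (by omega))

/-! ### The universal hypergraph and its number of edges -/

/-- The bucket patterns `x` of potential edges: in each coordinate `i`, every vertex of `N i` is
within one shift of some vertex outside `N i`. -/
def GoodPattern {r s t : ℕ} (N : Fin s → Finset (Fin r)) (x : Fin r → Fin s × Fin t → Bool) :
    Prop :=
  ∀ i, ∀ a ∈ N i, ∃ a' ∉ N i, WClose (fun j => x a (i, j)) (fun j => x a' (i, j))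

/-- In one coordinate, the strings outside `N` are free, and each string in `N` is one of at most
five shifts of one of at most `r` of these. -/
theorem card_good_coordinate {r t : ℕ} (N : Finset (Fin r)) (S : Finset (Fin r → Fin t → Bool))
    (hS : ∀ y ∈ S, ∀ a ∈ N, ∃ a' ∉ N, WClose (y a) (y a')) :
    S.card ≤ (5 * r) ^ r * (2 ^ t) ^ (r - N.card) := by
  classical
  let Φ : (Fin r → Fin r) × (Fin r → Option (Bool × Bool)) ×
      ({a : Fin r // a ∈ Nᶜ} → Fin t → Bool) → Fin r → Fin t → Bool := fun z a =>
    if h : a ∈ Nᶜ then z.2.2 ⟨a, h⟩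
    else wnb (if h' : z.1 a ∈ Nᶜ then z.2.2 ⟨z.1 a, h'⟩ else fun _ => false) (z.2.1 a)
  have hsub : S ⊆ Finset.univ.image Φ := by
    intro y hy
    have h1 : ∀ a, ∃ a' c, a ∈ N → a' ∉ N ∧ y a = wnb (y a') c := by
      intro a
      by_cases ha : a ∈ N
      · obtain ⟨a', ha', hc⟩ := hS y hy a ha
        obtain ⟨c, hc⟩ := hc.exists_eq_wnb
        exact ⟨a', c, fun _ => ⟨ha', hc⟩⟩
      · exact ⟨a, none, fun h => absurd h ha⟩
    choose p c hpc using h1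
    refine Finset.mem_image.2 ⟨(p, c, fun a => y a.1), Finset.mem_univ _, ?_⟩
    funext a
    simp only [Φ]
    split_ifs with h h'
    · rfl
    · rw [Finset.mem_compl, not_not] at h
      exact (hpc a h).2.symm
    · rw [Finset.mem_compl, not_not] at h
      exact absurd (Finset.mem_compl.2 (hpc a h).1) h'
  refine (Finset.card_le_card hsub).trans (Finset.card_image_le.trans ?_)
  rw [Finset.card_univ, Fintype.card_prod, Fintype.card_prod]
  simp only [Fintype.card_fun, Fintype.card_fin, Fintype.card_option, Fintype.card_prod,
    Fintype.card_bool, Fintype.card_coe, Finset.card_compl]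
  rw [← mul_assoc, mul_pow, mul_comm (r ^ r)]

theorem card_good_patterns {r s t : ℕ} (N : Fin s → Finset (Fin r))
    (S : Finset (Fin r → Fin s × Fin t → Bool)) (hS : ∀ x ∈ S, GoodPattern N x) :
    S.card ≤ (5 * r) ^ (r * s) * (2 ^ t) ^ (∑ i, (r - (N i).card)) := by
  classical
  let G : Fin s → Finset (Fin r → Fin t → Bool) := fun i =>
    Finset.univ.filter (fun y => ∀ a ∈ N i, ∃ a' ∉ N i, WClose (y a) (y a'))
  have h1 : S.card ≤ (Fintype.piFinset G).card := by
    apply Finset.card_le_card_of_injOn (fun x i a j => x a (i, j))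
    · intro x hx
      rw [Finset.mem_coe, Fintype.mem_piFinset]
      intro i
      simp only [G, Finset.mem_filter, Finset.mem_univ, true_and]
      exact hS x hx i
    · intro x _ y _ h
      funext a p
      exact congrFun (congrFun (congrFun h p.1) a) p.2
  refine h1.trans ?_
  rw [Fintype.card_piFinset]
  calc ∏ i, (G i).card ≤ ∏ i, ((5 * r) ^ r * (2 ^ t) ^ (r - (N i).card)) :=
        Finset.prod_le_prod' fun i _ => card_good_coordinate (N i) (G i)
          (fun y hy => (Finset.mem_filter.1 hy).2)
    _ = _ := by
      rw [Finset.prod_mul_distrib, Finset.prod_pow_eq_pow_sum, Finset.prod_pow_eq_pow_sum]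
      simp [mul_comm r s]

/-- Edge set of the universal hypergraph: `r`-sets whose vertices lie in buckets adjacent (in the
expander `Γ`) to the buckets of a good pattern with large `N`. -/
noncomputable def univEdges (r s t k n : ℕ)
    (Γ : (Fin s × Fin t → Bool) → Finset (Fin s × Fin t → Bool))
    (β : Fin n → Fin s × Fin t → Bool) : Finset (Finset (Fin n)) :=
  open Classical in
  (Finset.univ.filter (fun w : Fin r → Fin n => Function.Injective w ∧
    ∃ (N : Fin s → Finset (Fin r)) (x : Fin r → Fin s × Fin t → Bool), GoodPattern N x ∧
      s * (r + 1) ≤ k * ∑ i, (N i).card ∧ ∀ a, β (w a) ∈ Γ (x a))).image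
    (fun w => Finset.univ.image w)

theorem univEdges_uniform {r s t k n : ℕ}
    {Γ : (Fin s × Fin t → Bool) → Finset (Fin s × Fin t → Bool)}
    {β : Fin n → Fin s × Fin t → Bool} : ∀ e ∈ univEdges r s t k n Γ β, e.card = r := by
  classical
  intro e he
  obtain ⟨w, hw, rfl⟩ := Finset.mem_image.1 he
  rw [Finset.card_image_of_injective _ (Finset.mem_filter.1 hw).2.1]
  simp

/-- A good pattern is determined by `∑ i, (r - #(N i))` free strings of length `t`, which is at most
`s * (r - (r + 1) / k)` of them, and it accounts for at most `17 ^ r * b ^ r` tuples of vertices. -/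
theorem card_univEdges_le {r s t k n b : ℕ} (hk : 0 < k)
    {Γ : (Fin s × Fin t → Bool) → Finset (Fin s × Fin t → Bool)}
    {β : Fin n → Fin s × Fin t → Bool} (hΓ : ∀ x, (Γ x).card ≤ 17)
    (hβ : ∀ x, (Finset.univ.filter (fun w => β w = x)).card ≤ b) :
    ((univEdges r s t k n Γ β).card : ℝ) ≤ (2 ^ (r * s) * (5 * r) ^ (r * s) * 17 ^ r : ℕ) *
      ((2 : ℝ) ^ (s * t)) ^ ((r : ℝ) - (r + 1) / k) * (b : ℝ) ^ r := by
  classical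
  let T : Finset (Fin s → Finset (Fin r)) :=
    Finset.univ.filter (fun N => s * (r + 1) ≤ k * ∑ i, (N i).card)
  let S : (Fin s → Finset (Fin r)) → Finset (Fin r → Fin s × Fin t → Bool) := fun N =>
    Finset.univ.filter (fun x => GoodPattern N x)
  have hsub : (Finset.univ.filter (fun w : Fin r → Fin n => Function.Injective w ∧
      ∃ (N : Fin s → Finset (Fin r)) (x : Fin r → Fin s × Fin t → Bool), GoodPattern N x ∧
      s * (r + 1) ≤ k * ∑ i, (N i).card ∧ ∀ a, β (w a) ∈ Γ (x a))) ⊆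
      T.biUnion (fun N => (S N).biUnion (fun x =>
        Fintype.piFinset (fun a => Finset.univ.filter (fun w => β w ∈ Γ (x a))))) := by
    intro w hw
    obtain ⟨-, -, N, x, h1, h2, h3⟩ := Finset.mem_filter.1 hw
    simp only [Finset.mem_biUnion, Fintype.mem_piFinset, T, S, Finset.mem_filter, Finset.mem_univ,
      true_and]
    exact ⟨N, h2, x, h1, h3⟩
  have hpi : ∀ x : Fin r → Fin s × Fin t → Bool,
      (Fintype.piFinset (fun a => Finset.univ.filter (fun w => β w ∈ Γ (x a)))).card
        ≤ 17 ^ r * b ^ r := by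
    intro x
    rw [Fintype.card_piFinset, ← mul_pow]
    calc _ ≤ ∏ _a : Fin r, (17 * b) := by
          apply Finset.prod_le_prod'
          intro a _
          rw [card_filter_mem_eq_sum]
          refine (Finset.sum_le_card_nsmul _ _ b (fun y _ => hβ y)).trans ?_
          rw [smul_eq_mul]
          exact Nat.mul_le_mul_right _ (hΓ _)
      _ = _ := by simp
  set X : ℝ := ((2 : ℝ) ^ (s * t)) ^ ((r : ℝ) - (r + 1) / k) with hX
  have hSN : ∀ N ∈ T, ((S N).card : ℝ) ≤ (5 * r) ^ (r * s) * X := by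
    intro N hN
    have h1 := card_good_patterns N (S N) (fun x hx => (Finset.mem_filter.1 hx).2)
    have h2 : ((2 : ℝ) ^ t) ^ (∑ i, (r - (N i).card)) ≤ X := by
      rw [hX, ← pow_mul, ← Real.rpow_natCast, ← Real.rpow_natCast, ← Real.rpow_mul (by norm_num)]
      apply Real.rpow_le_rpow_of_exponent_le (by norm_num)
      have h3 := (Finset.mem_filter.1 hN).2
      have hk' : (0 : ℝ) < k := by exact_mod_cast hk
      have h4 : (s : ℝ) * (r + 1) ≤ k * ∑ i, ((N i).card : ℝ) := by exact_mod_cast h3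
      have h5 : (s : ℝ) * ((r + 1) / k) ≤ ∑ i, ((N i).card : ℝ) := by
        rw [← mul_div_assoc, div_le_iff₀ hk']
        linarith
      have h6 : ((∑ i, (r - (N i).card) : ℕ) : ℝ) = s * r - ∑ i, ((N i).card : ℝ) := by
        push_cast
        have : ∀ i, ((r - (N i).card : ℕ) : ℝ) = r - ((N i).card : ℝ) := by
          intro i
          rw [Nat.cast_sub]
          simpa using Finset.card_le_univ (N i)
        simp only [this, Finset.sum_sub_distrib]
        simp
      rw [Nat.cast_mul, h6]
      push_cast
      have ht : (0 : ℝ) ≤ t := Nat.cast_nonneg t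
      nlinarith
    calc ((S N).card : ℝ) ≤ ((5 * r) ^ (r * s) * (2 ^ t) ^ (∑ i, (r - (N i).card)) : ℕ) := by
          exact_mod_cast h1
      _ ≤ _ := by
        push_cast
        gcongr
  have hT : T.card ≤ 2 ^ (r * s) := by
    refine (Finset.card_le_univ T).trans ?_
    simp [pow_mul]
  have hX0 : 0 ≤ X := by positivity
  have h0 : ((univEdges r s t k n Γ β).card : ℝ) ≤
      ∑ N ∈ T, ((S N).card : ℝ) * (17 ^ r * b ^ r) := by
    have h1 : (univEdges r s t k n Γ β).card ≤ ∑ N ∈ T, (S N).card * (17 ^ r * b ^ r) := by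
      unfold univEdges
      refine Finset.card_image_le.trans ((Finset.card_le_card hsub).trans ?_)
      refine Finset.card_biUnion_le.trans (Finset.sum_le_sum fun N _ => ?_)
      exact Finset.card_biUnion_le_card_mul (S N) _ _ (fun x _ => hpi x)
    exact_mod_cast h1
  refine h0.trans ?_
  calc _ ≤ ∑ N ∈ T, ((5 * r) ^ (r * s) * X) * ((17 : ℝ) ^ r * b ^ r) := by
        apply Finset.sum_le_sum
        intro N hN
        exact mul_le_mul_of_nonneg_right (hSN N hN) (by positivity)
    _ = T.card * (((5 * r) ^ (r * s) * X) * ((17 : ℝ) ^ r * b ^ r)) := by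
        rw [Finset.sum_const, nsmul_eq_mul]
    _ ≤ (2 ^ (r * s) : ℕ) * (((5 * r) ^ (r * s) * X) * ((17 : ℝ) ^ r * b ^ r)) := by
        gcongr
    _ = _ := by push_cast; ring

/-! ### Universality -/

theorem card_fin_mod_eq (n M v : ℕ) (hv : v < M) :
    (Finset.univ.filter (fun w : Fin n => w.1 % M = v)).card =
      n / M + if v < n % M then 1 else 0 := by
  have h := Nat.count_modEq_card n (r := M) (by omega) v
  rw [Nat.count_eq_card_filter_range, Nat.mod_eq_of_lt hv] at h
  rw [← h, Finset.card_filter, Finset.card_filter,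
    Fin.sum_univ_eq_sum_range (fun w => if w % M = v then 1 else 0)]
  apply Finset.sum_congr rfl
  intro w _
  simp [Nat.ModEq, Nat.mod_eq_of_lt hv]

/-- The vertices of `Fin n` can be spread almost evenly over the elements of a type. -/
theorem exists_even_map {X : Type*} [Fintype X] [DecidableEq X] [Nonempty X] (n : ℕ) :
    ∃ β : Fin n → X, ∀ x, n / Fintype.card X ≤ (Finset.univ.filter (fun w => β w = x)).card ∧
      (Finset.univ.filter (fun w => β w = x)).card ≤ n / Fintype.card X + 1 := by
  have hM : 0 < Fintype.card X := Fintype.card_pos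
  refine ⟨fun w => (Fintype.equivFin X).symm ⟨w.1 % Fintype.card X, Nat.mod_lt _ hM⟩, ?_⟩
  intro x
  have h : (Finset.univ.filter (fun w : Fin n => (Fintype.equivFin X).symm
      ⟨w.1 % Fintype.card X, Nat.mod_lt _ hM⟩ = x)) =
      Finset.univ.filter (fun w : Fin n => w.1 % Fintype.card X = (Fintype.equivFin X x).1) := by
    apply Finset.filter_congr
    intro w _
    rw [Equiv.symm_apply_eq, Fin.ext_iff]
  rw [h, card_fin_mod_eq _ _ _ (Fintype.equivFin X x).2]
  split_ifs <;> omega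

/-- If every hypergraph of the family has a layout, then `univEdges` is universal: the vertices are
mapped to bit strings by `exists_windows`, and moved by `exists_relocation` to vertices of `Fin n`
in adjacent buckets. -/
theorem universal_of_layout {r d k s B t n : ℕ} (hk : 0 < k)
    (hlay : ∀ E : Finset (Finset (Fin n)), (∀ e ∈ E, e.card = r) →
      (∀ v, (E.filter (fun e => v ∈ e)).card ≤ d) →
      ∃ σ : Fin s → Fin n → Fin n × ℕ,
        (∀ i p, (Finset.univ.filter (fun v => σ i v = p)).card ≤ B) ∧
        ∀ e ∈ E, ∃ N : Fin s → Finset (Fin n),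
          (∀ i, N i ⊆ e ∧ ∀ v ∈ N i, ∃ u ∈ e \ N i, PosClose 1 (σ i v) (σ i u)) ∧
          s * (r + 1) ≤ k * ∑ i, (N i).card)
    (hn : 40 * 2 ^ (s * t) ≤ n)
    (hsmall : 2 * (2 : ℝ) ^ (s * t) * (s * (2 * t * B) + 1 : ℕ) *
      Real.exp (-(n / (12800 * (2 : ℝ) ^ (s * t) * (s * (2 * t * B) + 1 : ℕ)))) < 1) :
    ∃ EH : Finset (Finset (Fin n)), (∀ e ∈ EH, e.card = r) ∧
      (EH.card : ℝ) ≤ (2 ^ (r * s) * (5 * r) ^ (r * s) * 17 ^ r : ℕ) *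
      ((2 : ℝ) ^ (s * t)) ^ ((r : ℝ) - (r + 1) / k) * (2 * n / (2 : ℝ) ^ (s * t)) ^ r ∧
      HypergraphUniversal r n d n EH := by
  classical
  obtain ⟨Γ, hrefl, hsymm, hΓ, hexp⟩ := exists_expander (Fin s × Fin t → Bool)
  obtain ⟨β, hβ⟩ := exists_even_map (X := Fin s × Fin t → Bool) n
  have hM : Fintype.card (Fin s × Fin t → Bool) = 2 ^ (s * t) := by simp
  rw [hM] at hβ
  set M : ℕ := 2 ^ (s * t) with hMdef
  have hMR : (2 : ℝ) ^ (s * t) = M := by rw [hMdef]; push_cast; rfl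
  have hMpos : 0 < M := by positivity
  have hMpos' : (0 : ℝ) < M := by exact_mod_cast hMpos
  have hnR : (40 : ℝ) * M ≤ n := by exact_mod_cast hn
  have h40 : (40 : ℝ) ≤ n / M := by rwa [le_div_iff₀ hMpos']
  have hdiv1 : ((n / M : ℕ) : ℝ) ≤ n / M := Nat.cast_div_le
  have hdiv2 : (n : ℝ) / M ≤ (n / M : ℕ) + 1 := by
    rw [div_le_iff₀ hMpos']
    have := Nat.lt_div_mul_add (a := n) hMpos
    have : (n : ℝ) ≤ (n / M : ℕ) * M + M := by exact_mod_cast this.le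
    linarith
  refine ⟨univEdges r s t k n Γ β, univEdges_uniform, ?_, ?_⟩
  · refine (card_univEdges_le hk hΓ (fun x => (hβ x).2)).trans ?_
    rw [hMR]
    have : ((n / M + 1 : ℕ) : ℝ) ≤ 2 * n / M := by
      push_cast
      rw [mul_div_assoc]
      linarith
    gcongr
  · intro E hE hd
    obtain ⟨σ, hσ, hN⟩ := hlay E hE hd
    obtain ⟨f, hf, hfc⟩ := exists_windows s B t σ hσ _ rfl (by simpa using hsmall)
    obtain ⟨φ, hφ, hφΓ⟩ := exists_relocation rfl Γ hrefl hsymm hexp f β ((n : ℝ) / M)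
      (by positivity) (by simpa [hMR] using hf) (by
        intro x
        have h1 : ((n / M : ℕ) : ℝ) ≤ (Finset.univ.filter (fun w => β w = x)).card := by
          exact_mod_cast (hβ x).1
        have h2 : ((Finset.univ.filter (fun w => β w = x)).card : ℝ) ≤ (n / M : ℕ) + 1 := by
          exact_mod_cast (hβ x).2
        constructor <;> linarith)
    refine ⟨φ, hφ, fun e he => ?_⟩
    obtain ⟨N, hNe, hNc⟩ := hN e he
    let g : Fin r → Fin n := fun a => e.orderEmbOfFin (hE e he) a
    have hg : Function.Injective g := (e.orderEmbOfFin (hE e he)).injective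
    have hge : Finset.univ.image g = e := by
      ext v
      simp only [Finset.mem_image, Finset.mem_univ, true_and, g]
      have := Finset.range_orderEmbOfFin e (hE e he)
      rw [← Finset.mem_coe, ← this, Set.mem_range]
    unfold univEdges
    refine Finset.mem_image.2 ⟨φ ∘ g, ?_, by rw [← Finset.image_image, hge]⟩
    refine Finset.mem_filter.2 ⟨Finset.mem_univ _, hφ.comp hg,
      fun i => Finset.univ.filter (fun a => g a ∈ N i), fun a => f (g a), ?_, ?_, ?_⟩
    · intro i a ha
      obtain ⟨u, hu, hc⟩ := (hNe i).2 (g a) (Finset.mem_filter.1 ha).2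
      obtain ⟨hue, huN⟩ := Finset.mem_sdiff.1 hu
      rw [← hge] at hue
      obtain ⟨a', -, rfl⟩ := Finset.mem_image.1 hue
      exact ⟨a', by simpa using huN, hfc i _ _ hc⟩
    · have : ∀ i, (Finset.univ.filter (fun a => g a ∈ N i)).card = (N i).card := by
        intro i
        rw [← Finset.card_image_of_injective _ hg]
        congr 1
        ext v
        simp only [Finset.mem_image, Finset.mem_filter, Finset.mem_univ, true_and]
        constructor
        · rintro ⟨a, ha, rfl⟩
          exact ha
        · intro hv
          have := (hNe i).1 hv
          rw [← hge] at this
          obtain ⟨a, -, rfl⟩ := Finset.mem_image.1 this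
          exact ⟨a, hv, rfl⟩
      simpa only [this] using hNc
    · intro a
      exact hφΓ (g a)

/-! ### Choice of parameters -/

/-- With `2 ^ (s * t)` of order `n / (log n) ^ 2`, the union bound behind `exists_windows`
succeeds. -/
theorem exists_scale (s B : ℕ) (hs : 0 < s) : ∃ A : ℝ, 0 < A ∧ ∃ n₀ : ℕ, ∀ n : ℕ, n₀ ≤ n →
    ∃ t : ℕ, 40 * 2 ^ (s * t) ≤ n ∧
      2 * (2 : ℝ) ^ (s * t) * (s * (2 * t * B) + 1 : ℕ) *
        Real.exp (-(n / (12800 * (2 : ℝ) ^ (s * t) * (s * (2 * t * B) + 1 : ℕ)))) < 1 ∧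
      n / (A * Real.log n ^ 2) ≤ (2 : ℝ) ^ (s * t) := by
  set A₀ : ℝ := 3 * 12800 * (4 * B + 2) with hA₀
  have hB : (0 : ℝ) ≤ B := Nat.cast_nonneg B
  have hA₀pos : 40 ≤ A₀ := by rw [hA₀]; linarith
  refine ⟨A₀ * 2 ^ s, by positivity, ?_⟩
  have hev : ∀ᶠ x : ℝ in Filter.atTop, A₀ * Real.log x ^ 2 ≤ x ∧ 1 ≤ Real.log x ∧ 1 ≤ x := by
    have h1 := (Real.isLittleO_pow_log_id_atTop (n := 2)).def (c := A₀⁻¹) (by positivity)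
    filter_upwards [h1, Real.tendsto_log_atTop.eventually_ge_atTop 1,
      Filter.eventually_ge_atTop 1] with x hx hx1 hx2
    refine ⟨?_, hx1, hx2⟩
    simp only [Real.norm_eq_abs, id, abs_pow, sq_abs] at hx
    rw [abs_of_nonneg (by linarith), inv_mul_eq_div, le_div_iff₀ (by linarith)] at hx
    linarith
  obtain ⟨n₀, hn₀⟩ := Filter.eventually_atTop.1
    (tendsto_natCast_atTop_atTop (R := ℝ).eventually hev)
  refine ⟨n₀, fun n hn => ?_⟩
  obtain ⟨h1, hL, hn1⟩ := hn₀ n hn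
  set L := Real.log n with hLdef
  have hnpos : (0 : ℝ) < n := by linarith
  have hden : 0 < A₀ * L ^ 2 := by positivity
  have hy : 1 ≤ n / (A₀ * L ^ 2) := by rwa [le_div_iff₀ hden, one_mul]
  obtain ⟨t, ht1, ht2⟩ := exists_nat_pow_near hy
    (one_lt_pow₀ (by norm_num : (1 : ℝ) < 2) hs.ne')
  have hNeq : ((2 : ℝ) ^ s) ^ t = 2 ^ (s * t) := by rw [pow_mul]
  rw [hNeq] at ht1
  rw [pow_succ ((2 : ℝ) ^ s) t, hNeq] at ht2
  set N : ℝ := 2 ^ (s * t) with hN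
  have hNpos : 0 < N := by positivity
  have hNn : N * (A₀ * L ^ 2) ≤ n := by rwa [le_div_iff₀ hden] at ht1
  have hL2 : 1 ≤ L ^ 2 := one_le_pow₀ hL
  have h40 : 40 * N ≤ n := by
    have h : 40 ≤ A₀ * L ^ 2 := by nlinarith
    linarith [mul_le_mul_of_nonneg_left h hNpos.le]
  have hst : (s : ℝ) * t ≤ 2 * L := by
    have h2 : Real.log N ≤ L := Real.log_le_log hNpos (by linarith)
    rw [hN, Real.log_pow] at h2
    push_cast at h2
    have h3 := Real.log_two_gt_d9
    have h4 : (0 : ℝ) ≤ s * t := by positivity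
    nlinarith
  set Q : ℝ := ((s * (2 * t * B) + 1 : ℕ) : ℝ) with hQ
  have hQ1 : 1 ≤ Q := by
    rw [hQ]; exact_mod_cast Nat.le_add_left 1 _
  have hQL : Q ≤ (4 * B + 2) * L := by
    rw [hQ]
    push_cast
    nlinarith [mul_le_mul_of_nonneg_right hst hB]
  have hNQ : 3 * L * (12800 * N * Q) ≤ n := by
    calc 3 * L * (12800 * N * Q) ≤ 3 * L * (12800 * N * ((4 * B + 2) * L)) := by gcongr
      _ = N * (A₀ * L ^ 2) := by rw [hA₀]; ring
      _ ≤ n := hNn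
  refine ⟨t, ?_, ?_, ?_⟩
  · have : ((40 * 2 ^ (s * t) : ℕ) : ℝ) ≤ n := by push_cast; exact h40
    exact_mod_cast this
  · have hNQpos : 0 < 12800 * N * Q := by positivity
    have h5 : Real.exp (-(n / (12800 * N * Q))) ≤ Real.exp (-(3 * L)) := by
      apply Real.exp_le_exp.2
      apply neg_le_neg
      rwa [le_div_iff₀ hNQpos]
    have h6 : 2 * N * Q ≤ Real.exp L := by
      rw [hLdef, Real.exp_log hnpos]
      have : 0 < N * Q := by positivity
      nlinarith
    calc 2 * N * Q * Real.exp (-(n / (12800 * N * Q))) ≤ Real.exp L * Real.exp (-(3 * L)) := by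
          gcongr
      _ = Real.exp (-(2 * L)) := by rw [← Real.exp_add]; ring_nf
      _ < 1 := by rw [Real.exp_lt_one_iff]; linarith
  · rw [div_le_iff₀ (by positivity)]
    rw [div_lt_iff₀ hden] at ht2
    linarith

theorem edge_bound {C₁ A n L N e : ℝ} {r : ℕ} (hC : 0 ≤ C₁) (hA : 0 < A) (hn : 0 < n)
    (hL : 0 < L) (he : 0 ≤ e) (hN : n / (A * L ^ 2) ≤ N) :
    C₁ * N ^ ((r : ℝ) - e) * (2 * n / N) ^ r ≤
      (C₁ * 2 ^ r * A ^ e) * n ^ ((r : ℝ) - e) * L ^ (2 * e) := by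
  have hy : 0 < n / (A * L ^ 2) := by positivity
  have hNpos : 0 < N := hy.trans_le hN
  have h1 : N ^ (-e) ≤ (n / (A * L ^ 2)) ^ (-e) :=
    Real.rpow_le_rpow_of_nonpos hy hN (by linarith)
  have h2 : (n / (A * L ^ 2)) ^ (-e) = A ^ e * n ^ (-e) * L ^ (2 * e) := by
    rw [Real.div_rpow hn.le (by positivity), Real.mul_rpow hA.le (by positivity),
      ← Real.rpow_natCast L 2, ← Real.rpow_mul hL.le, Real.rpow_neg hA.le]
    have h3 : L ^ (((2 : ℕ) : ℝ) * -e) = (L ^ (2 * e))⁻¹ := by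
      rw [← Real.rpow_neg hL.le]; push_cast; ring_nf
    rw [h3]
    field_simp
  rw [sub_eq_add_neg, Real.rpow_add hNpos, Real.rpow_add hn, Real.rpow_natCast, Real.rpow_natCast,
    div_pow, mul_pow]
  calc C₁ * (N ^ r * N ^ (-e)) * (2 ^ r * n ^ r / N ^ r) = C₁ * 2 ^ r * n ^ r * N ^ (-e) := by
        field_simp
    _ ≤ C₁ * 2 ^ r * n ^ r * (A ^ e * n ^ (-e) * L ^ (2 * e)) := by
        rw [← h2]; gcongr
    _ = _ := by ring

/-- For bounded `n` the complete hypergraph suffices. -/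
theorem complete_universal (r n d : ℕ) :
    HypergraphUniversal r n d n (Finset.powersetCard r Finset.univ) := by
  intro E hE _
  refine ⟨id, Function.injective_id, fun e he => ?_⟩
  rw [Finset.image_id, Finset.mem_powersetCard]
  exact ⟨Finset.subset_univ _, hE e he⟩

/-- for odd `r ≥ 3` and `Δ ≥ 2`, with `Δ' = ⌈(r+1)Δ/r⌉`, there are
`𝓕^(r)(n,Δ)`-universal `r`-uniform hypergraphs on exactly `n` vertices with at most
`C·n^{r-(r+1)/Δ'}·(ln n)^{2(r+1)/Δ'}` edges. -/
theorem universal_odd_uniformity_spanning (r Δ : ℕ) (hr : 3 ≤ r) (hro : Odd r)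
    (hΔ : 2 ≤ Δ) (Δ' : ℕ) (hΔ' : Δ' = ⌈((r + 1 : ℚ) * Δ) / r⌉₊) :
    ∃ C : ℝ, 0 < C ∧ ∀ n : ℕ, 2 ≤ n →
      ∃ EH : Finset (Finset (Fin n)),
        (∀ e ∈ EH, e.card = r) ∧
        (EH.card : ℝ) ≤ C * (n : ℝ) ^ ((r : ℝ) - (r + 1 : ℝ) / (Δ' : ℝ)) *
          Real.log n ^ ((2 * (r + 1) : ℝ) / (Δ' : ℝ)) ∧
        HypergraphUniversal r n Δ n EH := by
  have hk : (r + 1) * Δ ≤ Δ' * r := by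
    have h1 : ((r + 1 : ℚ) * Δ) / r ≤ Δ' := hΔ' ▸ Nat.le_ceil _
    have h2 : (0 : ℚ) < r := by exact_mod_cast (by omega : 0 < r)
    rw [div_le_iff₀ h2] at h1
    exact_mod_cast h1
  have hk2 : 2 ≤ Δ' := by nlinarith
  have hkR : (2 : ℝ) ≤ Δ' := by exact_mod_cast hk2
  have hrR : (3 : ℝ) ≤ r := by exact_mod_cast hr
  obtain ⟨s, B, hs, hlay⟩ := exists_layout r Δ Δ' hr hro hΔ hk
  obtain ⟨A, hA, n₀, hn₀⟩ := exists_scale s B hs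
  set e : ℝ := ((r : ℝ) + 1) / Δ' with he
  have he0 : 0 ≤ e := by positivity
  have her : 0 ≤ (r : ℝ) - e := by
    rw [sub_nonneg, he, div_le_iff₀ (by linarith)]
    nlinarith
  have hexp : (2 * (r + 1) : ℝ) / Δ' = 2 * e := by rw [he]; ring
  rw [hexp]
  set C₁ : ℝ := ((2 ^ (r * s) * (5 * r) ^ (r * s) * 17 ^ r : ℕ) : ℝ) with hC₁
  have hC₁0 : 0 ≤ C₁ := Nat.cast_nonneg _
  set C₂ : ℝ := C₁ * 2 ^ r * A ^ e with hC₂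
  have hC₂0 : 0 ≤ C₂ := by positivity
  have hl2 : 0 < Real.log 2 := Real.log_pos (by norm_num)
  set C₃ : ℝ := 2 ^ n₀ / Real.log 2 ^ (2 * e) with hC₃
  have hC₃0 : 0 < C₃ := by positivity
  refine ⟨C₂ + C₃, by positivity, fun n hn => ?_⟩
  have hnR : (2 : ℝ) ≤ n := by exact_mod_cast hn
  have hL : Real.log 2 ≤ Real.log n := Real.log_le_log (by norm_num) hnR
  have hLpos : 0 < Real.log n := hl2.trans_le hL
  rcases le_or_gt n₀ n with hle | hlt
  · obtain ⟨t, ht1, ht2, ht3⟩ := hn₀ n hle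
    obtain ⟨EH, h1, h2, h3⟩ := universal_of_layout (r := r) (d := Δ) (k := Δ') (s := s) (B := B) (by omega)
      (fun E hE hd => by
        obtain ⟨σ, hσ⟩ := hlay (Fin n) E hE hd
        exact ⟨σ, hσ⟩) ht1 ht2
    refine ⟨EH, h1, ?_, h3⟩
    refine h2.trans ((edge_bound hC₁0 hA (by linarith) hLpos he0 ht3).trans ?_)
    gcongr
    linarith
  · refine ⟨Finset.powersetCard r Finset.univ, fun e he => (Finset.mem_powersetCard.1 he).2, ?_,
      complete_universal r n Δ⟩
    have h1 : ((Finset.powersetCard r (Finset.univ : Finset (Fin n))).card : ℝ) ≤ 2 ^ n₀ := by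
      have h2 : (Finset.powersetCard r (Finset.univ : Finset (Fin n))).card ≤ 2 ^ n := by
        rw [Finset.card_powersetCard, Finset.card_univ, Fintype.card_fin]
        exact Nat.choose_le_two_pow n r
      exact_mod_cast h2.trans (Nat.pow_le_pow_right (by norm_num) hlt.le)
    have h3 : 1 ≤ (n : ℝ) ^ ((r : ℝ) - e) := Real.one_le_rpow (by linarith) her
    have h4 : Real.log 2 ^ (2 * e) ≤ Real.log n ^ (2 * e) :=
      Real.rpow_le_rpow hl2.le hL (by positivity)
    calc _ ≤ (2 : ℝ) ^ n₀ := h1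
      _ = C₃ * 1 * Real.log 2 ^ (2 * e) := by rw [hC₃]; field_simp
      _ ≤ (C₂ + C₃) * (n : ℝ) ^ ((r : ℝ) - e) * Real.log n ^ (2 * e) := by
        gcongr
        linarith
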